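/- arXiv:1301.5401 — 2 statements merged into one kernel-verified Lean document; each statement's English description precedes it below -/
import Mathlib

section
/- Let n, k be positive integers with n ≥ k and let U = (u_{ij}) be a random matrix distributed according to the Haar probability measure on the unitary group U(n). For any sequences i = (i_1,…,i_k), j = (j_1,…,j_k), i' = (i'_1,…,i'_k), j' = (j'_1,…,j'_k) of indices in {1,…,n}, the moment E[ u_{i_1 j_1} ⋯ u_{i_k j_k} · conj(u_{i'_1 j'_1} ⋯ u_{i'_k j'_k}) ] equals Σ_{σ,τ ∈ S_k} δ_σ(i,i') δ_τ(j,j') Wg^U(σ^{-1}τ; n). -/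
/-!
# Proof of the Weingarten formula for the unitary group

For fixed column sequences `j, j'`, the moments form a matrix `A` indexed by the row sequences
`i, i'`. Left invariance of the measure says that `A` commutes with `U^{⊗k}` for all unitary `U`
(`mom_commute`), hence with `X^{⊗k}` for every matrix `X` (`commute_tens_all`). As `k ≤ n`, such an
`A` is determined by its value on `e₁ ⊗ ⋯ ⊗ e_k`, which gives `A = ∑_σ c_σ δ_σ` for some
coefficients `c_σ` (`exists_coeff`).

Contracting this with `δ_π` gives, by orthonormality of the columns of `U` (`mom_contract`) and the
evaluation `⟨δ_π, δ_σ⟩ = n^{cyc(π⁻¹σ)}` of the Gram matrix (`gram`), the linear system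
`∑_σ n^{cyc(π⁻¹σ)} c_σ = δ_π(j, j')`. Its solution is `c_σ = ∑_τ Wg(σ⁻¹τ) δ_τ(j, j')`, because the
Weingarten function is the convolution inverse of `n^{cyc}`.
-/

/-!
Weingarten calculus for classical compact Lie groups and compact symmetric spaces
(S. Matsumoto, "Weingarten calculus for matrix ensembles associated with compact
symmetric spaces"): common definitions.

We index `{1,…,m}` by `Fin m` (0-indexed), so the pair `{2r-1, 2r}` becomes
`{2r, 2r+1}` for `r ∈ Fin k`.
-/

open MeasureTheory Finset Matrix

namespace WgPaper

/-- `lo r` is the (0-indexed) point `2r`, i.e. `2r - 1` in 1-indexed notation. -/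
def lo {k : ℕ} (i : Fin k) : Fin (2 * k) := ⟨2 * (i : ℕ), by have := i.isLt; omega⟩

/-- `hi r` is the (0-indexed) point `2r + 1`, i.e. `2r` in 1-indexed notation. -/
def hi {k : ℕ} (i : Fin k) : Fin (2 * k) := ⟨2 * (i : ℕ) + 1, by have := i.isLt; omega⟩

/-- Number of cycles of a permutation, counting fixed points as 1-cycles. -/
def cyc {m : ℕ} (σ : Equiv.Perm (Fin m)) : ℕ :=
  Multiset.card σ.cycleType + (Finset.univ.filter fun x => σ x = x).card

/-- Number of even-length cycles of a permutation. -/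
def evenCycles {m : ℕ} (σ : Equiv.Perm (Fin m)) : ℕ :=
  Multiset.card (σ.cycleType.filter fun d => d % 2 = 0)

/-- Number of odd-length cycles of a permutation, counting fixed points as 1-cycles. -/
def oddCycles {m : ℕ} (σ : Equiv.Perm (Fin m)) : ℕ :=
  Multiset.card (σ.cycleType.filter fun d => d % 2 = 1)
    + (Finset.univ.filter fun x => σ x = x).card

/-- The sign `ε(σ)` of a permutation, as an element of a commutative ring. -/
def sgn (R : Type*) [CommRing R] {m : ℕ} (σ : Equiv.Perm (Fin m)) : R :=
  ((Equiv.Perm.sign σ : ℤ) : R)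

/-- Full convolution on a finite group: `(f * g)(σ) = ∑_τ f(τ) g(τ⁻¹ σ)`. -/
def conv {G : Type*} [Group G] [Fintype G] {R : Type*} [CommRing R] (f g : G → R) : G → R :=
  fun σ => ∑ τ : G, f τ * g (τ⁻¹ * σ)

/-- The Dirac function at the identity permutation. -/
def deltaId {m : ℕ} {R : Type*} [CommRing R] : Equiv.Perm (Fin m) → R :=
  fun σ => if σ = 1 then 1 else 0

/-- The graph `Γ(σ)` on `{1,…,2k}` whose edges are `{2r-1, 2r}` and `{σ(2r-1), σ(2r)}`
(in 1-indexed notation) for `1 ≤ r ≤ k`. -/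
def Gamma {k : ℕ} (σ : Equiv.Perm (Fin (2 * k))) : SimpleGraph (Fin (2 * k)) :=
  SimpleGraph.fromRel fun a b =>
    (∃ r : Fin k, a = lo r ∧ b = hi r) ∨ ∃ r : Fin k, a = σ (lo r) ∧ b = σ (hi r)

/-- `c(σ)`, the number of connected components of `Γ(σ)`. -/
noncomputable def ccount {k : ℕ} (σ : Equiv.Perm (Fin (2 * k))) : ℕ :=
  Nat.card (Gamma σ).ConnectedComponent

/-- The number of vertices of a connected component of a graph. -/
noncomputable def compSize {V : Type*} {G : SimpleGraph V} (C : G.ConnectedComponent) : ℕ :=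
  Nat.card {v // G.connectedComponentMk v = C}

/-- `ℓe(σ)`: the number of connected components of `Γ(σ)` whose size is `≡ 0 (mod 4)`. -/
noncomputable def ecomp {k : ℕ} (σ : Equiv.Perm (Fin (2 * k))) : ℕ :=
  Nat.card {C : (Gamma σ).ConnectedComponent // compSize C % 4 = 0}

/-- `ℓo(σ)`: the number of connected components of `Γ(σ)` whose size is `≡ 2 (mod 4)`. -/
noncomputable def ocomp {k : ℕ} (σ : Equiv.Perm (Fin (2 * k))) : ℕ :=
  Nat.card {C : (Gamma σ).ConnectedComponent // compSize C % 4 = 2}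

/-- Membership in the hyperoctahedral subgroup `H_k ≤ S_{2k}`: each pair
`{2i-1, 2i}` is mapped onto some pair `{2j-1, 2j}`. -/
def IsHyper {k : ℕ} (ζ : Equiv.Perm (Fin (2 * k))) : Prop :=
  ∀ i : Fin k, ∃ j : Fin k, ({ζ (lo i), ζ (hi i)} : Finset (Fin (2 * k))) = {lo j, hi j}

/-- The defining property of the set `M_{2k}` of coset representatives of `S_{2k}/H_k`:
`σ(2i-1) < σ(2i)` for all `i` and `σ(1) < σ(3) < ⋯ < σ(2k-1)`. -/
def MProp {k : ℕ} (σ : Equiv.Perm (Fin (2 * k))) : Prop :=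
  (∀ i : Fin k, σ (lo i) < σ (hi i)) ∧ ∀ i j : Fin k, i < j → σ (lo i) < σ (lo j)

open scoped Classical in
/-- The set `M_{2k}` of coset representatives of `S_{2k}/H_k`, as a `Finset`. -/
noncomputable def Mset (k : ℕ) : Finset (Equiv.Perm (Fin (2 * k))) :=
  Finset.univ.filter MProp

/-- Reduced convolution: `(f ⋆ g)(σ) = ∑_{τ ∈ M_{2k}} f(τ) g(τ⁻¹ σ)`. -/
noncomputable def sconv {k : ℕ} {R : Type*} [CommRing R]
    (f g : Equiv.Perm (Fin (2 * k)) → R) : Equiv.Perm (Fin (2 * k)) → R :=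
  fun σ => ∑ τ ∈ Mset k, f τ * g (τ⁻¹ * σ)

open scoped Classical in
/-- The indicator function `1_k` of `H_k`. -/
noncomputable def oneH {k : ℕ} {R : Type*} [CommRing R] : Equiv.Perm (Fin (2 * k)) → R :=
  fun σ => if IsHyper σ then 1 else 0

open scoped Classical in
/-- The twisted indicator function `1_k^ε` of `H_k`: `σ ↦ ε(σ)` on `H_k`, `0` elsewhere. -/
noncomputable def oneHeps {k : ℕ} {R : Type*} [CommRing R] : Equiv.Perm (Fin (2 * k)) → R :=
  fun σ => if IsHyper σ then sgn R σ else 0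

/-- `δ_σ(i,j) = ∏_{s=1}^k δ_{i_{σ(s)}, j_s}`. -/
def deltaP {k : ℕ} {α : Type*} [DecidableEq α] {R : Type*} [CommRing R]
    (σ : Equiv.Perm (Fin k)) (i j : Fin k → α) : R :=
  ∏ s : Fin k, if i (σ s) = j s then 1 else 0

/-- `Δ_σ(i) = ∏_{s=1}^k δ_{i_{σ(2s-1)}, i_{σ(2s)}}`. -/
def DeltaO {k : ℕ} {α : Type*} [DecidableEq α] {R : Type*} [CommRing R]
    (σ : Equiv.Perm (Fin (2 * k))) (i : Fin (2 * k) → α) : R :=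
  ∏ s : Fin k, if i (σ (lo s)) = i (σ (hi s)) then 1 else 0

/-- The standard skew-symmetric matrix `J_n = ((O, I_n), (−I_n, O))`. -/
def Jmat (R : Type*) [CommRing R] (n : ℕ) : Matrix (Fin (2 * n)) (Fin (2 * n)) R :=
  Matrix.of fun p q =>
    if (p : ℕ) + n = (q : ℕ) then 1 else if (q : ℕ) + n = (p : ℕ) then -1 else 0

/-- `Δ'_σ(i) = ∏_{r=1}^k ⟨i_{σ(2r-1)}, i_{σ(2r)}⟩`, where `⟨p,q⟩` is the `(p,q)` entry
of `J_n`. -/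
def DeltaSp {k n : ℕ} (R : Type*) [CommRing R]
    (σ : Equiv.Perm (Fin (2 * k))) (i : Fin (2 * k) → Fin (2 * n)) : R :=
  ∏ s : Fin k, Jmat R n (i (σ (lo s))) (i (σ (hi s)))

/-- The signature matrix `I'_{a,n-a} = diag(I_a, −I_{n-a})`, of size `n`. -/
def Iab (R : Type*) [CommRing R] (n a : ℕ) : Matrix (Fin n) (Fin n) R :=
  Matrix.of fun p q => if p = q then (if (p : ℕ) < a then 1 else -1) else 0

/-- The signature matrix `I''_{a,n-a} = diag(I_a, −I_{n-a}, I_a, −I_{n-a})`, of size `2n`. -/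
def Ippab (R : Type*) [CommRing R] (n a : ℕ) : Matrix (Fin (2 * n)) (Fin (2 * n)) R :=
  Matrix.of fun p q => if p = q then (if (p : ℕ) % n < a then 1 else -1) else 0

/-- The unitary group `U(n)` of `n × n` complex unitary matrices. -/
abbrev UG (n : ℕ) := Matrix.unitaryGroup (Fin n) ℂ

/-- The real orthogonal group `O(n)`. -/
abbrev OG (n : ℕ) := Matrix.orthogonalGroup (Fin n) ℝ

noncomputable instance (n : ℕ) : MeasurableSpace (UG n) := borel _

noncomputable instance (n : ℕ) : MeasurableSpace (OG n) := borel _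

/-- A `2n × 2n` unitary matrix lies in the compact symplectic group `Sp(2n)`
iff `S J Sᵀ = J`. -/
def IsSymplectic {n : ℕ} (S : UG (2 * n)) : Prop :=
  (S : Matrix (Fin (2 * n)) (Fin (2 * n)) ℂ) * Jmat ℂ n
    * (S : Matrix (Fin (2 * n)) (Fin (2 * n)) ℂ)ᵀ = Jmat ℂ n

/-- The function `T^{D III}_n` on `S_{2k}`:
`σ ↦ ∑_p Δ_σ(p) ∏_{r=1}^k J_{p_{2r-1}, p_{2r}}`. -/
noncomputable def TDIII (n k : ℕ) : Equiv.Perm (Fin (2 * k)) → ℝ :=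
  fun σ => ∑ p : Fin (2 * k) → Fin (2 * n),
    DeltaO σ p * ∏ r : Fin k, Jmat ℝ n (p (lo r)) (p (hi r))

/-- The function `T^{C I}_n` on `S_{2k}`:
`σ ↦ ∑_p Δ'_σ(p) ∏_{r=1}^k (J I'_{nn})_{p_{2r-1}, p_{2r}}`. -/
noncomputable def TCI (n k : ℕ) : Equiv.Perm (Fin (2 * k)) → ℂ :=
  fun σ => ∑ p : Fin (2 * k) → Fin (2 * n),
    DeltaSp ℂ σ p * ∏ r : Fin k, (Jmat ℂ n * Iab ℂ (2 * n) n) (p (lo r)) (p (hi r))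

/-! ### Tensor powers of matrices -/

/-- The `k`-fold tensor power `X ⊗ ⋯ ⊗ X` of a matrix, as a matrix indexed by sequences. -/
def tens {n : ℕ} (k : ℕ) (X : Matrix (Fin n) (Fin n) ℂ) :
    Matrix (Fin k → Fin n) (Fin k → Fin n) ℂ :=
  Matrix.of fun i j => ∏ s : Fin k, X (i s) (j s)

lemma tens_apply {n k : ℕ} (X : Matrix (Fin n) (Fin n) ℂ) (i j : Fin k → Fin n) :
    tens k X i j = ∏ s : Fin k, X (i s) (j s) := rfl

lemma tens_mul {n k : ℕ} (X Y : Matrix (Fin n) (Fin n) ℂ) :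
    tens k (X * Y) = tens k X * tens k Y := by
  ext i j
  simp only [tens_apply, Matrix.mul_apply, Finset.prod_univ_sum, Fintype.piFinset_univ,
    Finset.prod_mul_distrib]

lemma tens_one {n k : ℕ} : tens k (1 : Matrix (Fin n) (Fin n) ℂ) = 1 := by
  ext i j
  simp [tens_apply, Matrix.one_apply, Finset.prod_ite_zero, funext_iff]

lemma tens_conjTranspose {n k : ℕ} (X : Matrix (Fin n) (Fin n) ℂ) :
    tens k Xᴴ = (tens k X)ᴴ := by
  ext i j
  simp [tens_apply, Matrix.conjTranspose_apply]

lemma deltaP_eq {n k : ℕ} (σ : Equiv.Perm (Fin k)) (i j : Fin k → Fin n) :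
    (deltaP σ i j : ℂ) = if i ∘ σ = j then 1 else 0 := by
  simp [deltaP, Finset.prod_ite_zero, funext_iff]

/-! ### Matrices commuting with the tensor powers of unitaries -/

/-- Two sequences taking each value equally often differ by a permutation of the positions. -/
lemma exists_perm_of_card_eq {n k : ℕ} (i j : Fin k → Fin n)
    (h : ∀ a, (univ.filter fun s => i s = a).card = (univ.filter fun s => j s = a).card) :
    ∃ σ : Equiv.Perm (Fin k), i ∘ σ = j := by
  have e : ∀ a, Nonempty ({s // j s = a} ≃ {s // i s = a}) := fun a =>
    ⟨Fintype.equivOfCardEq (by rw [Fintype.card_subtype, Fintype.card_subtype, h])⟩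
  refine ⟨Equiv.ofFiberEquiv fun a => (e a).some, ?_⟩
  ext s : 1
  exact Equiv.ofFiberEquiv_map _ s

lemma diagonal_mem_unitary {n : ℕ} (d : Fin n → ℂ) (hd : ∀ a, ‖d a‖ = 1) :
    Matrix.diagonal d ∈ Matrix.unitaryGroup (Fin n) ℂ := by
  rw [Matrix.mem_unitaryGroup_iff, Matrix.star_eq_conjTranspose, Matrix.diagonal_conjTranspose,
    Matrix.diagonal_mul_diagonal, ← Matrix.diagonal_one]
  congr 1
  ext a : 1
  simp [Complex.mul_conj, Complex.normSq_eq_norm_sq, hd]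

lemma tens_diagonal {n k : ℕ} (d : Fin n → ℂ) :
    tens k (Matrix.diagonal d) = Matrix.diagonal fun i => ∏ s, d (i s) := by
  ext i j
  by_cases h : i = j
  · subst h; simp [tens_apply]
  · rw [Matrix.diagonal_apply_ne _ h, tens_apply]
    obtain ⟨s, hs⟩ := Function.ne_iff.1 h
    exact Finset.prod_eq_zero (mem_univ s) (Matrix.diagonal_apply_ne _ hs)

/-- Invariance under the diagonal unitaries: a matrix on `(ℂⁿ)^{⊗k}` commuting with them preserves
weight spaces, so its nonzero entries relate sequences that are rearrangements of each other. The
multiplicity of a value `a` is detected by the diagonal unitary with a primitive `(k+1)`-st root of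
unity in position `a` and `1` elsewhere, since multiplicities are at most `k`. -/
lemma exists_perm_of_entry_ne_zero {n k : ℕ} {A : Matrix (Fin k → Fin n) (Fin k → Fin n) ℂ}
    (hA : ∀ g ∈ Matrix.unitaryGroup (Fin n) ℂ, Commute (tens k g) A)
    {i j : Fin k → Fin n} (hij : A i j ≠ 0) : ∃ σ : Equiv.Perm (Fin k), i ∘ σ = j := by
  apply exists_perm_of_card_eq
  intro a
  have hw := Complex.isPrimitiveRoot_exp (k + 1) k.succ_ne_zero
  set w := Complex.exp (2 * Real.pi * Complex.I / (k + 1 : ℕ)) with hw'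
  have hn : ‖w‖ = 1 := hw.norm'_eq_one k.succ_ne_zero
  have h1 := hA _ (diagonal_mem_unitary (fun b => if b = a then w else 1)
    (fun b => by split_ifs <;> simp [hn]))
  have h2 := congrFun (congrFun h1.eq i) j
  rw [tens_diagonal, Matrix.diagonal_mul, Matrix.mul_diagonal, mul_comm] at h2
  have h3 := mul_left_cancel₀ hij h2
  rw [Finset.prod_ite, Finset.prod_ite] at h3
  simp only [Finset.prod_const, one_pow, mul_one] at h3
  refine hw.pow_inj ?_ ?_ h3 <;>
  exact Nat.lt_succ_of_le ((Finset.card_le_univ _).trans (by simp))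

open scoped ComplexOrder in
/-- Singular value decomposition of an invertible matrix. The matrix `U` diagonalizes the positive
definite matrix `X Xᴴ`, and the singular values are the square roots of its eigenvalues. -/
lemma exists_svd {n : ℕ} (X : Matrix (Fin n) (Fin n) ℂ) (hX : IsUnit X.det) :
    ∃ U ∈ Matrix.unitaryGroup (Fin n) ℂ, ∃ V ∈ Matrix.unitaryGroup (Fin n) ℂ, ∃ d : Fin n → ℂ,
      X = U * Matrix.diagonal d * V := by
  have hp : (X * Xᴴ).PosDef := by
    apply Matrix.PosDef.mul_conjTranspose_self
    exact Matrix.vecMul_injective_of_isUnit ((Matrix.isUnit_iff_isUnit_det _).2 hX)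
  set U : Matrix (Fin n) (Fin n) ℂ := hp.1.eigenvectorUnitary.1
  have hUm : U ∈ Matrix.unitaryGroup (Fin n) ℂ := hp.1.eigenvectorUnitary.2
  have hspec := hp.1.conjStarAlgAut_star_eigenvectorUnitary
  rw [Unitary.conjStarAlgAut_star_apply] at hspec
  set l := hp.1.eigenvalues
  have hl : ∀ a, 0 < l a := hp.eigenvalues_pos
  have hs : ∀ a, ((√(l a) : ℝ) : ℂ) ≠ 0 := fun a =>
    Complex.ofReal_ne_zero.2 (Real.sqrt_pos.2 (hl a)).ne'
  have hsq : ∀ a, ((√(l a) : ℝ) : ℂ) * (√(l a) : ℝ) = l a := fun a => by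
    rw [← Complex.ofReal_mul, Real.mul_self_sqrt (hl a).le]
  have hspec' : Uᴴ * (X * Xᴴ) * U = Matrix.diagonal fun a => (l a : ℂ) := hspec
  set r : Fin n → ℂ := fun a => (√(l a) : ℝ)
  have hdd : Matrix.diagonal r * Matrix.diagonal (fun a => (r a)⁻¹) = 1 := by
    rw [Matrix.diagonal_mul_diagonal, ← Matrix.diagonal_one]
    congr 1; ext a : 1; exact mul_inv_cancel₀ (hs a)
  refine ⟨U, hUm, Matrix.diagonal (fun a => (r a)⁻¹) * (Uᴴ * X), ?_, r, ?_⟩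
  · rw [Matrix.mem_unitaryGroup_iff, Matrix.star_eq_conjTranspose]
    have : (Matrix.diagonal (fun a => (r a)⁻¹))ᴴ = Matrix.diagonal (fun a => (r a)⁻¹) := by
      rw [Matrix.diagonal_conjTranspose]; congr 1; ext a : 1; simp [r]
    calc _ = Matrix.diagonal (fun a => (r a)⁻¹) * (Uᴴ * (X * Xᴴ) * U) *
          Matrix.diagonal (fun a => (r a)⁻¹) := by
            simp only [Matrix.conjTranspose_mul, this, Matrix.conjTranspose_conjTranspose,
              Matrix.mul_assoc]
      _ = 1 := by
        rw [hspec', Matrix.diagonal_mul_diagonal, Matrix.diagonal_mul_diagonal,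
          ← Matrix.diagonal_one]
        congr 1; ext a : 1
        rw [← hsq]
        have := hs a
        simp only [r]
        field_simp
  · have hUU : U * Uᴴ = 1 := Matrix.mem_unitaryGroup_iff.1 hUm
    calc X = U * (Matrix.diagonal r * Matrix.diagonal (fun a => (r a)⁻¹)) * (Uᴴ * X) := by
            rw [hdd, Matrix.mul_one, ← Matrix.mul_assoc, hUU, Matrix.one_mul]
      _ = _ := by simp only [Matrix.mul_assoc]

/-- The unitarian trick: commuting with `U^{⊗k}` for unitary `U` forces commuting with `X^{⊗k}` for
every `X`. Diagonal matrices are handled by weights, transvections are invertible and hence of the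
form (unitary)·(diagonal)·(unitary), and these two kinds of matrices generate all matrices. -/
lemma commute_tens_all {n k : ℕ} {A : Matrix (Fin k → Fin n) (Fin k → Fin n) ℂ}
    (hA : ∀ g ∈ Matrix.unitaryGroup (Fin n) ℂ, Commute (tens k g) A)
    (X : Matrix (Fin n) (Fin n) ℂ) : Commute (tens k X) A := by
  have hdiag : ∀ d : Fin n → ℂ, Commute (tens k (Matrix.diagonal d)) A := by
    intro d
    rw [tens_diagonal]
    ext i j
    rw [Matrix.diagonal_mul, Matrix.mul_diagonal]
    by_cases h : A i j = 0
    · simp [h]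
    · obtain ⟨σ, rfl⟩ := exists_perm_of_entry_ne_zero hA h
      rw [mul_comm]
      congr 1
      exact (Equiv.prod_comp σ fun s => d (i s)).symm
  have hmul : ∀ Y Z : Matrix (Fin n) (Fin n) ℂ, Commute (tens k Y) A → Commute (tens k Z) A →
      Commute (tens k (Y * Z)) A := by
    intro Y Z hY hZ
    rw [tens_mul]
    exact hY.mul_left hZ
  induction X using Matrix.diagonal_transvection_induction with
  | hdiag D _ => exact hdiag D
  | htransvec t =>
    obtain ⟨U, hU, V, hV, d, h⟩ := exists_svd t.toMatrix (by simp)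
    rw [h]
    exact hmul _ _ (hmul _ _ (hA U hU) (hdiag d)) (hA V hV)
  | hmul Y Z hY hZ => exact hmul Y Z hY hZ

/-- For `k ≤ n`, the matrices commuting with all `U^{⊗k}` are linear combinations of the permutation
matrices `(i, i') ↦ δ_σ(i, i')`. The basis vector `e = e₁ ⊗ ⋯ ⊗ e_k` has pairwise distinct indices,
its image under `A` is supported on the rearrangements of `e`, and every basis vector is `X^{⊗k} e`
for some `X`, so `A` is determined by `A e`. -/
lemma exists_coeff {n k : ℕ} (hnk : k ≤ n) {A : Matrix (Fin k → Fin n) (Fin k → Fin n) ℂ}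
    (hA : ∀ g ∈ Matrix.unitaryGroup (Fin n) ℂ, Commute (tens k g) A) :
    ∃ c : Equiv.Perm (Fin k) → ℂ, ∀ i i', A i i' = ∑ σ, deltaP σ i i' * c σ := by
  set e : Fin k → Fin n := Fin.castLE hnk with he
  have einj : Function.Injective e := Fin.castLE_injective hnk
  refine ⟨fun σ => A (e ∘ ⇑σ⁻¹) e, fun i i' => ?_⟩
  set f : Fin n → Fin n := Function.extend e i' id with hf
  have hfe : ∀ s, f (e s) = i' s := fun s => einj.extend_apply _ _ s
  -- On basis vectors `e_b ↦ e_{f b}`, so that `X^{⊗k}` carries `e` to the vector indexed by `i'`.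
  set X : Matrix (Fin n) (Fin n) ℂ := Matrix.of fun a b => if a = f b then 1 else 0 with hX
  have htX : ∀ a b : Fin k → Fin n, tens k X a b = if a = f ∘ b then 1 else 0 := fun a b => by
    simp [tens_apply, X, Finset.prod_ite_zero, funext_iff]
  have key := congrFun (congrFun (commute_tens_all hA X).eq i) e
  have hfe' : f ∘ e = i' := funext hfe
  have hr : (A * tens k X) i e = A i i' := by
    simp [Matrix.mul_apply, htX, hfe']
  rw [← hr, ← key, Matrix.mul_apply]
  have hinj : Function.Injective fun σ : Equiv.Perm (Fin k) => e ∘ ⇑σ⁻¹ := by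
    intro σ τ h
    refine inv_injective (Equiv.ext fun s => einj (congrFun h s))
  symm
  refine Finset.sum_of_injOn (fun σ : Equiv.Perm (Fin k) => e ∘ ⇑σ⁻¹) hinj.injOn
    (fun _ _ => by simp) ?_ ?_
  · intro b _ hb
    by_contra hne
    obtain ⟨σ, hσ⟩ := exists_perm_of_entry_ne_zero hA (right_ne_zero_of_mul hne)
    refine hb ⟨σ, by simp, ?_⟩
    funext s
    simp [← hσ]
  · intro σ _
    rw [htX, deltaP_eq, ← Function.comp_assoc, hfe']
    congr 1
    congr 1
    rw [eq_iff_iff]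
    constructor
    · rintro rfl; funext s; simp
    · rintro rfl; funext s; simp

/-! ### The Gram matrix -/

/-- Functions invariant under `ρ` are the functions on the set of cycles of `ρ`, which is modelled by
the nontrivial cycle factors together with the fixed points. -/
lemma card_invariant {n k : ℕ} (ρ : Equiv.Perm (Fin k)) :
    (univ.filter fun m : Fin k → Fin n => m ∘ ρ = m).card = n ^ cyc ρ := by
  classical
  -- `cl x` is the cycle through `x`.
  let cl : Fin k → ρ.cycleFactorsFinset ⊕ {x // ρ x = x} := fun x =>
    if h : ρ x = x then Sum.inr ⟨x, h⟩
    else Sum.inl ⟨ρ.cycleOf x, Equiv.Perm.cycleOf_mem_cycleFactorsFinset_iff.2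
      (Equiv.Perm.mem_support.2 h)⟩
  have hsurj : Function.Surjective cl := by
    rintro (⟨c, hc⟩ | ⟨x, hx⟩)
    · obtain ⟨x, hx⟩ := (Equiv.Perm.mem_cycleFactorsFinset_iff.1 hc).1.nonempty_support
      have hcx := Equiv.Perm.cycle_is_cycleOf hx hc
      have hne : ρ x ≠ x := Equiv.Perm.mem_support.1
        (Equiv.Perm.mem_cycleFactorsFinset_support_le hc hx)
      exact ⟨x, by simp [cl, hne, hcx]⟩
    · exact ⟨x, by simp [cl, hx]⟩
  have hclρ : ∀ x, cl (ρ x) = cl x := by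
    intro x
    by_cases h : ρ x = x
    · rw [h]
    · have h' : ρ (ρ x) ≠ ρ x := fun h' => h (ρ.injective h')
      simp only [cl, h, h', dif_neg, not_false_eq_true, Sum.inl.injEq, Subtype.mk.injEq]
      exact (Equiv.Perm.SameCycle.cycleOf_eq ⟨1, by simp⟩).symm
  have hfib : ∀ x y, cl x = cl y → ρ.SameCycle x y := by
    intro x y h
    by_cases hx : ρ x = x <;> by_cases hy : ρ y = y <;> simp [cl, hx, hy] at h
    · rw [h]
    · exact (Equiv.Perm.sameCycle_iff_cycleOf_eq_of_mem_support
        (Equiv.Perm.mem_support.2 hx) (Equiv.Perm.mem_support.2 hy)).2 h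
  have hcard : Fintype.card (ρ.cycleFactorsFinset ⊕ {x // ρ x = x}) = cyc ρ := by
    simp [cyc, Equiv.Perm.cycleType_def, Fintype.card_subtype]
  have : (univ.filter fun m : Fin k → Fin n => m ∘ ρ = m) =
      univ.image fun g : ρ.cycleFactorsFinset ⊕ {x // ρ x = x} → Fin n => g ∘ cl := by
    ext m
    simp only [mem_filter, mem_univ, true_and, mem_image]
    constructor
    · intro hm
      have hz : ∀ z : ℤ, ∀ x, m ((ρ ^ z) x) = m x := by
        intro z
        induction z with
        | zero => simp
        | succ z ih => intro x; rw [_root_.zpow_add_one, Equiv.Perm.mul_apply, ih]; exact congrFun hm x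
        | pred z ih =>
          intro x
          rw [_root_.zpow_sub_one, Equiv.Perm.mul_apply, ih]
          have := congrFun hm (ρ⁻¹ x)
          simpa using this.symm
      refine ⟨fun c => m (hsurj c).choose, ?_⟩
      funext x
      obtain ⟨z, hz'⟩ := hfib _ _ (hsurj (cl x)).choose_spec
      rw [Function.comp_apply, ← hz (z), hz']
    · rintro ⟨g, rfl⟩
      funext x
      simp [hclρ]
  rw [this, Finset.card_image_of_injective _ hsurj.injective_comp_right]
  rw [Finset.card_univ, Fintype.card_fun, hcard, Fintype.card_fin]

/-- The Gram matrix of the permutation tensors `δ_σ`. -/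
lemma gram {n k : ℕ} (π σ : Equiv.Perm (Fin k)) :
    ∑ i : Fin k → Fin n, ∑ i' : Fin k → Fin n, (deltaP π i i' : ℂ) * deltaP σ i i' =
      (n : ℂ) ^ cyc (π⁻¹ * σ) := by
  simp only [deltaP_eq, ite_mul, one_mul, zero_mul, Finset.sum_ite_eq, mem_univ, if_true]
  rw [Finset.sum_boole, ← Nat.cast_pow, ← card_invariant]
  congr 1
  refine Finset.card_bij (fun i _ => i ∘ π) ?_ ?_ ?_
  · intro i hi
    simp only [mem_filter, mem_univ, true_and] at hi ⊢
    rw [← hi]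
    funext s
    have := congrFun hi
    simp at this ⊢
    simp [this]
  · intro a _ b _ h
    exact π.surjective.injective_comp_right h
  · intro m hm
    simp only [mem_filter, mem_univ, true_and] at hm
    refine ⟨m ∘ ⇑π⁻¹, ?_, by funext s; simp⟩
    simp only [mem_filter, mem_univ, true_and]
    funext s
    simpa using congrFun hm s

/-! ### The matrix of moments -/

instance (n : ℕ) : BorelSpace (UG n) := ⟨rfl⟩

lemma continuous_tens {n k : ℕ} (i j : Fin k → Fin n) :
    Continuous fun U : UG n => tens k (U : Matrix (Fin n) (Fin n) ℂ) i j := by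
  simp only [tens_apply]
  exact continuous_finsetProd _ fun s _ => (continuous_subtype_val).matrix_elem _ _

lemma norm_tens_le {n k : ℕ} (U : UG n) (i j : Fin k → Fin n) :
    ‖tens k (U : Matrix (Fin n) (Fin n) ℂ) i j‖ ≤ 1 := by
  rw [tens_apply, norm_prod]
  exact Finset.prod_le_one (fun _ _ => norm_nonneg _)
    fun s _ => entry_norm_bound_of_unitary U.2 _ _

/-- The degree `k` moments of `U` with fixed column sequences `j, j'`, as a matrix indexed by the row
sequences `i, i'`. -/
noncomputable def mom {n k : ℕ} (μ : Measure (UG n)) (j j' : Fin k → Fin n) :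
    Matrix (Fin k → Fin n) (Fin k → Fin n) ℂ :=
  Matrix.of fun i i' => ∫ U : UG n, tens k (U : Matrix (Fin n) (Fin n) ℂ) i j *
    star (tens k (U : Matrix (Fin n) (Fin n) ℂ) i' j') ∂μ

lemma integrable_tens {n k : ℕ} (μ : Measure (UG n)) [IsProbabilityMeasure μ]
    (i j i' j' : Fin k → Fin n) :
    Integrable (fun U : UG n => tens k (U : Matrix (Fin n) (Fin n) ℂ) i j *
      star (tens k (U : Matrix (Fin n) (Fin n) ℂ) i' j')) μ := by
  refine Integrable.of_bound (C := 1)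
    ((continuous_tens i j).mul (continuous_tens i' j').star).aestronglyMeasurable
    (Filter.Eventually.of_forall fun U => ?_)
  rw [norm_mul, norm_star]
  have h := norm_tens_le U i' j'
  exact mul_le_one₀ (norm_tens_le U i j) (norm_nonneg _) h

/-- Left invariance of `μ`, read as invariance of the matrix of moments in its row indices. -/
lemma mom_commute {n k : ℕ} (μ : Measure (UG n)) [IsProbabilityMeasure μ]
    (hμ : ∀ g : UG n, μ.map (fun x => g * x) = μ) (j j' : Fin k → Fin n)
    (g : Matrix (Fin n) (Fin n) ℂ) (hg : g ∈ Matrix.unitaryGroup (Fin n) ℂ) :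
    Commute (tens k g) (mom μ j j') := by
  have hinv : tens k g * mom μ j j' * (tens k g)ᴴ = mom μ j j' := by
    ext i i'
    have h1 : mom μ j j' i i' = ∫ U : UG n, tens k (g * (U : Matrix (Fin n) (Fin n) ℂ)) i j *
        star (tens k (g * (U : Matrix (Fin n) (Fin n) ℂ)) i' j') ∂μ := by
      change ∫ U : UG n, _ ∂μ = _
      have hc : Continuous fun x : UG n => (⟨g, hg⟩ : UG n) * x :=
        (Continuous.subtype_mk (continuous_const.matrix_mul continuous_subtype_val) _)
      conv_lhs => rw [← hμ ⟨g, hg⟩]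
      rw [integral_map hc.measurable.aemeasurable]
      · rfl
      · exact ((continuous_tens i j).mul (continuous_tens i' j').star).aestronglyMeasurable
    rw [h1]
    simp only [tens_mul, Matrix.mul_apply, star_sum, star_mul', Finset.sum_mul, Finset.mul_sum]
    simp only [Matrix.conjTranspose_apply]
    rw [integral_finsetSum]
    swap
    · intro b _
      refine integrable_finsetSum _ fun a _ => ?_
      refine ((integrable_tens μ a j b j').const_mul
        (tens k g i a * star (tens k g i' b))).congr (Filter.Eventually.of_forall fun U => ?_)
      simp only; ring
    refine Finset.sum_congr rfl fun b _ => ?_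
    rw [integral_finsetSum]
    swap
    · intro a _
      refine ((integrable_tens μ a j b j').const_mul
        (tens k g i a * star (tens k g i' b))).congr (Filter.Eventually.of_forall fun U => ?_)
      simp only; ring
    refine Finset.sum_congr rfl fun a _ => ?_
    have : ∀ U : UG n, tens k g i a * tens k (U : Matrix (Fin n) (Fin n) ℂ) a j *
        (star (tens k g i' b) * star (tens k (U : Matrix (Fin n) (Fin n) ℂ) b j')) =
        (tens k g i a * star (tens k g i' b)) * (tens k (U : Matrix (Fin n) (Fin n) ℂ) a j *
          star (tens k (U : Matrix (Fin n) (Fin n) ℂ) b j')) := fun U => by ring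
    simp only [this]
    rw [integral_const_mul]
    change _ * (∫ U : UG n, _ ∂μ) * _ = _
    ring
  have hgg : (tens k g)ᴴ * tens k g = 1 := by
    rw [← tens_conjTranspose, ← tens_mul, ← Matrix.star_eq_conjTranspose,
      Matrix.mem_unitaryGroup_iff'.1 hg, tens_one]
  change _ * _ = _ * _
  conv_rhs => rw [← hinv]
  rw [Matrix.mul_assoc, hgg, Matrix.mul_one]

/-- Contracting the row indices with `δ_π` removes the integral, because the columns of `U` are
orthonormal. -/
lemma mom_contract {n k : ℕ} (μ : Measure (UG n)) [IsProbabilityMeasure μ]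
    (j j' : Fin k → Fin n) (π : Equiv.Perm (Fin k)) :
    ∑ i, ∑ i', deltaP π i i' * mom μ j j' i i' = deltaP π j j' := by
  simp only [deltaP_eq, ite_mul, one_mul, zero_mul, Finset.sum_ite_eq, mem_univ, if_true]
  simp only [mom, Matrix.of_apply]
  rw [← integral_finsetSum _ fun i _ => integrable_tens μ i j (i ∘ π) j']
  have : ∀ U : UG n, ∑ i, tens k (U : Matrix (Fin n) (Fin n) ℂ) i j *
      star (tens k (U : Matrix (Fin n) (Fin n) ℂ) (i ∘ π) j') =
      if j ∘ π = j' then 1 else 0 := by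
    intro U
    have hp : ∀ i : Fin k → Fin n, tens k (U : Matrix (Fin n) (Fin n) ℂ) i j =
        tens k (U : Matrix (Fin n) (Fin n) ℂ) (i ∘ π) (j ∘ π) := fun i =>
      (Equiv.prod_comp π fun s => (U : Matrix (Fin n) (Fin n) ℂ) (i s) (j s)).symm
    simp only [hp]
    refine ((Equiv.arrowCongr π.symm (Equiv.refl (Fin n))).sum_comp
      (fun i => tens k (U : Matrix (Fin n) (Fin n) ℂ) i (j ∘ π) *
        star (tens k (U : Matrix (Fin n) (Fin n) ℂ) i j'))).trans ?_
    have h1 : (tens k (U : Matrix (Fin n) (Fin n) ℂ))ᴴ * tens k (U : Matrix (Fin n) (Fin n) ℂ)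
        = 1 := by
      rw [← tens_conjTranspose, ← tens_mul, ← Matrix.star_eq_conjTranspose,
        Matrix.mem_unitaryGroup_iff'.1 U.2, tens_one]
    have h2 := congrFun (congrFun h1 j') (j ∘ π)
    rw [Matrix.mul_apply, Matrix.one_apply] at h2
    simp only [Matrix.conjTranspose_apply] at h2
    simp only [mul_comm (tens k _ _ (j ∘ π)), h2, eq_comm]
  simp only [this]
  simp

/-- Weingarten calculus for unitary groups, Theorem 2.2, main formula. -/
theorem stmt0 (n k : ℕ) (hk : 0 < k) (hnk : k ≤ n)
    (μ : Measure (UG n)) [IsProbabilityMeasure μ]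
    (hμ : ∀ g : UG n, μ.map (fun x => g * x) = μ)
    (WgU : Equiv.Perm (Fin k) → ℂ)
    (hWg : conv (fun σ => (n : ℂ) ^ cyc σ) WgU = deltaId)
    (hWg' : conv WgU (fun σ => (n : ℂ) ^ cyc σ) = deltaId)
    (i j i' j' : Fin k → Fin n) :
    ∫ U : UG n, (∏ s : Fin k, (U : Matrix (Fin n) (Fin n) ℂ) (i s) (j s)) *
        star (∏ s : Fin k, (U : Matrix (Fin n) (Fin n) ℂ) (i' s) (j' s)) ∂μ
      = ∑ σ : Equiv.Perm (Fin k), ∑ τ : Equiv.Perm (Fin k),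
          deltaP σ i i' * deltaP τ j j' * WgU (σ⁻¹ * τ) := by
  obtain ⟨c, hc⟩ := exists_coeff hnk (mom_commute μ hμ j j')
  have hlin : ∀ π : Equiv.Perm (Fin k),
      ∑ σ, (n : ℂ) ^ cyc (π⁻¹ * σ) * c σ = deltaP π j j' := by
    intro π
    rw [← mom_contract μ j j' π]
    simp only [hc, ← gram, Finset.mul_sum, Finset.sum_mul]
    rw [Finset.sum_comm]
    refine Finset.sum_congr rfl fun i _ => ?_
    rw [Finset.sum_comm]
    exact Finset.sum_congr rfl fun i' _ => Finset.sum_congr rfl fun σ _ => by ring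
  have hcW : ∀ σ, c σ = ∑ τ, deltaP τ j j' * WgU (σ⁻¹ * τ) := by
    intro σ
    simp only [← hlin, Finset.sum_mul]
    rw [Finset.sum_comm]
    have hW : ∀ ρ : Equiv.Perm (Fin k),
        ∑ τ : Equiv.Perm (Fin k), WgU (σ⁻¹ * τ) * (n : ℂ) ^ cyc (τ⁻¹ * ρ) =
          if ρ = σ then 1 else 0 := by
      intro ρ
      have h := congrFun hWg' (σ⁻¹ * ρ)
      simp only [conv, deltaId, inv_mul_eq_one] at h
      rw [← Fintype.sum_equiv (Equiv.mulLeft σ⁻¹) _ _ fun _ => rfl] at h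
      simpa [mul_assoc, eq_comm] using h
    have : ∀ ρ : Equiv.Perm (Fin k),
        ∑ τ : Equiv.Perm (Fin k), (n : ℂ) ^ cyc (τ⁻¹ * ρ) * c ρ * WgU (σ⁻¹ * τ) =
          if ρ = σ then c ρ else 0 := by
      intro ρ
      rw [← mul_boole, ← hW, Finset.mul_sum]
      exact Finset.sum_congr rfl fun τ _ => by ring
    simp [this]
  change mom μ j j' i i' = _
  rw [hc]
  refine Finset.sum_congr rfl fun σ _ => ?_
  rw [hcW, Finset.mul_sum]
  exact Finset.sum_congr rfl fun τ _ => by ring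

end WgPaper
end

section
/- Let n, k be positive integers with n ≥ k and let R = (r_{ij}) be a Haar-distributed random matrix from the real orthogonal group O(n). For any sequences i = (i_1,…,i_{2k}) and j = (j_1,…,j_{2k}) in {1,…,n}, E[ r_{i_1 j_1} r_{i_2 j_2} ⋯ r_{i_{2k} j_{2k}} ] = Σ_{σ,τ ∈ M_{2k}} Δ_σ(i) Δ_τ(j) Wg^O(σ^{-1}τ; n). Moreover, for any n ≥ 1 and any odd number 2k+1 of factors, E[ r_{i_1 j_1} ⋯ r_{i_{2k+1} j_{2k+1}} ] = 0 for all index sequences. -/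
/-!
The odd moments vanish because `-1 ∈ O(n)`. For the even ones, fix `j` and regard the moments
`E(i)` as a tensor in the row indices `i`. Left invariance of the measure says that this tensor is
fixed by the diagonal action of `O(n)`.

The main point is that, for `k ≤ n`, an `O(n)`-invariant tensor `T` of degree `2k` is a combination
of the pairing tensors `Δ_σ`, `σ ∈ M_{2k}` (`Inv.expand`). The tensors `Δ_τ` are dual to the
evaluations at the sequences `seqOf σ` taking a different value on each block of the pair partition
of `σ` (here `k ≤ n` gives enough values), so it suffices that `T` vanishes when it vanishes at all
of these (`Inv.eq_zero`). Reflections show that `T i = 0` unless every value occurs in `i` an even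
number of times; permutation matrices reduce sequences whose values all occur exactly twice to
`seqOf σ`. If a value `a` occurs at least four times in `i`, then fewer than `k` values occur, some
value `b` is unused, and differentiating invariance along rotations in the plane `(a, b)` writes
`T i` as a sum of values of `T` at sequences with one more distinct value (`Inv.split`), so
induction applies.

Hence `E(i) = ∑ c_σ Δ_σ(i)`. Contracting with `Δ_τ(i)` and using column orthogonality gives
`∑ c_σ n^{c(σ⁻¹τ)} = Δ_τ(j)`, because `n^{c(σ⁻¹τ)}` is the Gram matrix of the pairing tensors
(`sum_Delta`). The defining equation of the Weingarten function says that `Wg(σ⁻¹τ)` is the inverse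
of this Gram matrix (`gram_mul_wg`), and being the inverse of a symmetric matrix it is symmetric, so
`c_σ = ∑ Δ_τ(j) Wg(σ⁻¹τ)`.
-/

/-!
Weingarten calculus for classical compact Lie groups and compact symmetric spaces
(S. Matsumoto, "Weingarten calculus for matrix ensembles associated with compact
symmetric spaces"): common definitions.

We index `{1,…,m}` by `Fin m` (0-indexed), so the pair `{2r-1, 2r}` becomes
`{2r, 2r+1}` for `r ∈ Fin k`.
-/

open MeasureTheory Finset Matrix

namespace WgPaper

/-! ### Pairings and coset representatives -/

lemma perm_inv_apply {α : Type*} (σ : Equiv.Perm α) (x : α) : σ⁻¹ (σ x) = x := by simp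

lemma perm_apply_inv {α : Type*} (σ : Equiv.Perm α) (x : α) : σ (σ⁻¹ x) = x := by simp

/-- The block `{2r, 2r+1}` containing a point. -/
def blk {k : ℕ} (x : Fin (2 * k)) : Fin k := ⟨(x : ℕ) / 2, by have := x.isLt; omega⟩

/-- The fixed-point-free involution exchanging `lo r` and `hi r`. -/
def eps {k : ℕ} : Equiv.Perm (Fin (2 * k)) :=
  Function.Involutive.toPerm
    (fun x => if (x : ℕ) % 2 = 0 then hi (blk x) else lo (blk x)) (by
      intro x
      apply Fin.ext
      by_cases h : (x : ℕ) % 2 = 0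
      · have h1 : (2 * ((x : ℕ) / 2) + 1) % 2 = 1 := by omega
        simp [h, hi, lo, blk, h1]; omega
      · simp [h, hi, lo, blk]; omega)

lemma eps_apply {k : ℕ} (x : Fin (2 * k)) :
    eps x = if (x : ℕ) % 2 = 0 then hi (blk x) else lo (blk x) := rfl

@[simp] lemma eps_lo {k : ℕ} (r : Fin k) : eps (lo r) = hi r := by
  simp [eps_apply, lo, hi, blk]

@[simp] lemma eps_hi {k : ℕ} (r : Fin k) : eps (hi r) = lo r := by
  have h1 : (2 * (r : ℕ) + 1) % 2 = 1 := by omega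
  apply Fin.ext
  simp [eps_apply, lo, hi, blk, h1]; omega

@[simp] lemma blk_lo {k : ℕ} (r : Fin k) : blk (lo r) = r := by
  apply Fin.ext; simp [lo, blk]

@[simp] lemma blk_hi {k : ℕ} (r : Fin k) : blk (hi r) = r := by
  apply Fin.ext; simp [hi, blk]; omega

lemma lo_or_hi {k : ℕ} (x : Fin (2 * k)) : x = lo (blk x) ∨ x = hi (blk x) := by
  rcases Nat.mod_two_eq_zero_or_one (x : ℕ) with h | h
  · left; apply Fin.ext; simp [lo, blk]; omega
  · right; apply Fin.ext; simp [hi, blk]; omega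

lemma lo_ne_hi {k : ℕ} (r s : Fin k) : lo r ≠ hi s := by
  intro h
  have := congrArg Fin.val h
  simp only [lo, hi] at this
  omega

@[simp] lemma eps_eps {k : ℕ} (x : Fin (2 * k)) : eps (eps x) = x := by
  rcases lo_or_hi x with h | h <;> rw [h] <;> simp

lemma eps_ne {k : ℕ} (x : Fin (2 * k)) : eps x ≠ x := by
  rcases lo_or_hi x with h | h <;> rw [h] <;> simp
  · exact (lo_ne_hi _ _).symm
  · exact lo_ne_hi _ _

lemma blk_eq_iff {k : ℕ} {x y : Fin (2 * k)} : blk x = blk y ↔ y = x ∨ y = eps x := by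
  constructor
  · intro h
    rcases lo_or_hi x with hx | hx <;> rcases lo_or_hi y with hy | hy <;>
      rw [hx, hy] <;> simp [h]
  · rintro (h | h)
    · rw [h]
    · rw [h]
      rcases lo_or_hi x with hx | hx <;> rw [hx] <;> simp

lemma forall_pairs {k : ℕ} {P : Fin (2 * k) → Prop} :
    (∀ x, P x) ↔ ∀ r : Fin k, P (lo r) ∧ P (hi r) := by
  constructor
  · intro h r; exact ⟨h _, h _⟩
  · intro h x
    rcases lo_or_hi x with hx | hx
    · rw [hx]; exact (h _).1
    · rw [hx]; exact (h _).2

/-- `H_k` is the centralizer of the involution `eps`. -/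
lemma isHyper_iff {k : ℕ} (ζ : Equiv.Perm (Fin (2 * k))) :
    IsHyper ζ ↔ ∀ x, ζ (eps x) = eps (ζ x) := by
  rw [forall_pairs]
  unfold IsHyper
  refine forall_congr' fun r => ?_
  simp only [eps_lo, eps_hi]
  have hne : ζ (lo r) ≠ ζ (hi r) := fun h => lo_ne_hi _ _ (ζ.injective h)
  constructor
  · rintro ⟨j, hj⟩
    have h1 : ζ (lo r) ∈ ({lo j, hi j} : Finset (Fin (2 * k))) := by rw [← hj]; simp
    have h2 : ζ (hi r) ∈ ({lo j, hi j} : Finset (Fin (2 * k))) := by rw [← hj]; simp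
    simp only [Finset.mem_insert, Finset.mem_singleton] at h1 h2
    rcases h1 with h1 | h1 <;> rcases h2 with h2 | h2 <;> simp_all
  · rintro ⟨h1, -⟩
    refine ⟨blk (ζ (lo r)), ?_⟩
    rw [h1]
    rcases lo_or_hi (ζ (lo r)) with hx | hx
    · rw [hx]; simp
    · rw [hx]; simp [Finset.pair_comm]

lemma isHyper_iff_blk {k : ℕ} (ζ : Equiv.Perm (Fin (2 * k))) :
    IsHyper ζ ↔ ∀ r, blk (ζ (lo r)) = blk (ζ (hi r)) := by
  rw [isHyper_iff, forall_pairs]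
  refine forall_congr' fun r => ?_
  have hne : ζ (lo r) ≠ ζ (hi r) := fun h => lo_ne_hi _ _ (ζ.injective h)
  rw [blk_eq_iff, eps_lo, eps_hi]
  constructor
  · rintro ⟨h, -⟩; exact Or.inr h
  · rintro (h | h)
    · exact absurd h.symm hne
    · exact ⟨h, by rw [h, eps_eps]⟩

/-- The pair partition attached to the coset `σ H_k`, as a fixed-point-free involution. -/
def pr {k : ℕ} (σ : Equiv.Perm (Fin (2 * k))) (x : Fin (2 * k)) : Fin (2 * k) := σ (eps (σ⁻¹ x))

lemma pr_eq_iff {k : ℕ} (σ τ : Equiv.Perm (Fin (2 * k))) :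
    IsHyper (σ⁻¹ * τ) ↔ pr σ = pr τ := by
  rw [isHyper_iff]
  constructor
  · intro h
    funext x
    have := h (τ⁻¹ x)
    simp only [Equiv.Perm.mul_apply, perm_apply_inv] at this
    unfold pr
    rw [← this]; simp
  · intro h x
    have := congrFun h (τ x)
    unfold pr at this
    simp only [perm_inv_apply] at this
    simp only [Equiv.Perm.mul_apply]
    rw [← this]; simp

lemma pr_ne {k : ℕ} (σ : Equiv.Perm (Fin (2 * k))) (x : Fin (2 * k)) : pr σ x ≠ x := by
  intro h
  unfold pr at h
  exact eps_ne (σ⁻¹ x) (σ.injective (by rw [h]; simp))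

lemma pr_pr {k : ℕ} (σ : Equiv.Perm (Fin (2 * k))) (x : Fin (2 * k)) :
    pr σ (pr σ x) = x := by simp [pr]

lemma pr_lo {k : ℕ} (σ : Equiv.Perm (Fin (2 * k))) (r : Fin k) :
    pr σ (σ (lo r)) = σ (hi r) := by simp [pr]

/-- The minima of the blocks of a pair partition, listed increasingly, are the values
`σ (lo r)` of its representative in `M_{2k}`. -/
lemma exists_rep {k : ℕ} (p : Fin (2 * k) → Fin (2 * k)) (hp : ∀ x, p (p x) = x)
    (hne : ∀ x, p x ≠ x) : ∃ σ : Equiv.Perm (Fin (2 * k)), MProp σ ∧ pr σ = p := by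
  classical
  have hinj : Function.Injective p := fun x y h => by rw [← hp x, h, hp]
  set A : Finset (Fin (2 * k)) := univ.filter fun x => x < p x with hA
  have hAc : A.card = k := by
    have h1 : (univ.filter fun x => ¬ x < p x) = A.image p := by
      ext x
      simp only [hA, Finset.mem_filter, Finset.mem_univ, true_and, Finset.mem_image, not_lt]
      constructor
      · intro h
        exact ⟨p x, by rw [hp]; exact lt_of_le_of_ne h (hne x), hp x⟩
      · rintro ⟨y, hy, rfl⟩
        rw [hp]; exact hy.le
    have h2 := Finset.card_filter_add_card_filter_not (s := (univ : Finset (Fin (2 * k))))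
      (fun x => x < p x)
    rw [h1, Finset.card_image_of_injective _ hinj, Finset.card_univ, Fintype.card_fin] at h2
    change A.card + A.card = _ at h2
    omega
  let e := A.orderEmbOfFin hAc
  have he : ∀ r, e r < p (e r) := fun r => by
    have : e r ∈ A := A.orderEmbOfFin_mem hAc r
    simpa [hA] using this
  have hcross : ∀ r s, e r ≠ p (e s) := fun r s h => by
    have h1 := he r
    rw [h, hp] at h1
    exact absurd (he s) (not_lt.mpr h1.le)
  let f : Fin (2 * k) → Fin (2 * k) :=
    fun x => if (x : ℕ) % 2 = 0 then e (blk x) else p (e (blk x))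
  have flo : ∀ r, f (lo r) = e r := fun r => by
    have : ((lo r : Fin (2 * k)) : ℕ) % 2 = 0 := by simp [lo]
    simp [f, this]
  have fhi : ∀ r, f (hi r) = p (e r) := fun r => by
    have : ((hi r : Fin (2 * k)) : ℕ) % 2 = 1 := by simp only [hi]; omega
    simp [f, this]
  have finj : Function.Injective f := by
    intro x y
    rcases lo_or_hi x with hx | hx <;> rcases lo_or_hi y with hy | hy <;> rw [hx, hy] <;>
      simp only [flo, fhi] <;> intro h
    · rw [e.injective h]
    · exact absurd h (hcross _ _)
    · exact absurd h.symm (hcross _ _)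
    · rw [e.injective (hinj h)]
  let σ : Equiv.Perm (Fin (2 * k)) := Equiv.ofBijective f (Finite.injective_iff_bijective.mp finj)
  have σlo : ∀ r, σ (lo r) = e r := flo
  have σhi : ∀ r, σ (hi r) = p (e r) := fhi
  refine ⟨σ, ⟨fun r => ?_, fun r s h => ?_⟩, ?_⟩
  · rw [σlo, σhi]; exact he r
  · rw [σlo, σlo]; exact e.strictMono h
  · funext x
    obtain ⟨y, rfl⟩ := σ.surjective x
    simp only [pr, perm_inv_apply]
    rcases lo_or_hi y with hy | hy <;> rw [hy]
    · rw [eps_lo, σlo, σhi]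
    · rw [eps_hi, σlo, σhi, hp]

lemma rep_unique {k : ℕ} {σ τ : Equiv.Perm (Fin (2 * k))} (hσ : MProp σ) (hτ : MProp τ)
    (h : pr σ = pr τ) : σ = τ := by
  have key : ∀ ρ : Equiv.Perm (Fin (2 * k)), MProp ρ →
      Set.range (fun r : Fin k => ρ (lo r)) = {x | x < pr ρ x} := by
    intro ρ hρ
    ext x
    simp only [Set.mem_range, Set.mem_ofPred_eq]
    constructor
    · rintro ⟨r, rfl⟩
      rw [pr_lo]; exact hρ.1 r
    · intro hx
      obtain ⟨y, rfl⟩ := ρ.surjective x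
      rcases lo_or_hi y with hy | hy
      · exact ⟨_, by rw [← hy]⟩
      · exfalso
        rw [hy] at hx
        simp only [pr, perm_inv_apply, eps_hi] at hx
        exact absurd (hρ.1 (blk y)) (not_lt.mpr hx.le)
  have hs : StrictMono (fun r : Fin k => σ (lo r)) := fun r s h => hσ.2 r s h
  have ht : StrictMono (fun r : Fin k => τ (lo r)) := fun r s h => hτ.2 r s h
  have hlo : (fun r : Fin k => σ (lo r)) = fun r : Fin k => τ (lo r) := by
    apply (StrictMono.range_inj hs ht).mp
    rw [key σ hσ, key τ hτ, h]
  have hlo' : ∀ r : Fin k, σ (lo r) = τ (lo r) := fun r => congrFun hlo r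
  ext1 x
  rcases lo_or_hi x with hx | hx
  · rw [hx]; exact hlo' _
  · rw [hx, ← pr_lo, ← pr_lo, hlo', h]

lemma mem_Mset {k : ℕ} {σ : Equiv.Perm (Fin (2 * k))} : σ ∈ Mset k ↔ MProp σ := by
  simp [Mset]

lemma exists_rep' {k : ℕ} (σ : Equiv.Perm (Fin (2 * k))) : ∃ τ ∈ Mset k, pr τ = pr σ := by
  obtain ⟨τ, h1, h2⟩ := exists_rep (pr σ) (pr_pr σ) (pr_ne σ)
  exact ⟨τ, mem_Mset.mpr h1, h2⟩

lemma pr_mul {k : ℕ} {ρ σ τ : Equiv.Perm (Fin (2 * k))} (h : pr σ = pr τ) :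
    pr (ρ * σ) = pr (ρ * τ) := by
  rw [← pr_eq_iff] at h ⊢
  have : (ρ * σ)⁻¹ * (ρ * τ) = σ⁻¹ * τ := by group
  rwa [this]

/-- A sum over `M_{2k}` of a function constant on the cosets of `H_k` is invariant under left
translation of its argument. -/
lemma sum_Mset_translate {k : ℕ} (f : Equiv.Perm (Fin (2 * k)) → ℝ)
    (hf : ∀ σ τ, pr σ = pr τ → f σ = f τ) (ρ : Equiv.Perm (Fin (2 * k))) :
    ∑ τ ∈ Mset k, f (ρ * τ) = ∑ τ ∈ Mset k, f τ := by
  choose rep hrep hrep' using exists_rep' (k := k)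
  refine Finset.sum_nbij' (fun τ => rep (ρ * τ)) (fun τ => rep (ρ⁻¹ * τ))
    (fun _ _ => hrep _) (fun _ _ => hrep _) (fun τ hτ => ?_) (fun τ hτ => ?_) (fun τ _ => ?_)
  · apply rep_unique (mem_Mset.mp (hrep _)) (mem_Mset.mp hτ)
    rw [hrep', pr_mul (hrep' _)]; simp
  · apply rep_unique (mem_Mset.mp (hrep _)) (mem_Mset.mp hτ)
    rw [hrep', pr_mul (hrep' _)]; simp
  · exact hf _ _ (hrep' _).symm

/-! ### The pairing tensors and their Gram matrix -/

lemma DeltaO_eq {k : ℕ} {α : Type*} [DecidableEq α] (σ : Equiv.Perm (Fin (2 * k)))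
    (i : Fin (2 * k) → α) [Decidable (∀ x, i (pr σ x) = i x)] :
    (DeltaO σ i : ℝ) = if ∀ x, i (pr σ x) = i x then 1 else 0 := by
  have h : (∀ x, i (pr σ x) = i x) ↔ ∀ s ∈ (univ : Finset (Fin k)), i (σ (lo s)) = i (σ (hi s)) := by
    rw [← σ.forall_congr_right, forall_pairs]
    simp only [pr, perm_inv_apply, eps_lo, eps_hi, Finset.mem_univ, true_imp_iff]
    exact forall_congr' fun r => ⟨fun h => h.2, fun h => ⟨h.symm, h⟩⟩
  unfold DeltaO
  rw [Finset.prod_ite_zero]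
  simp only [Finset.prod_const_one, h]

lemma DeltaO_congr {k : ℕ} {α : Type*} [DecidableEq α] {σ τ : Equiv.Perm (Fin (2 * k))}
    (h : pr σ = pr τ) (i : Fin (2 * k) → α) : (DeltaO σ i : ℝ) = DeltaO τ i := by
  classical
  rw [DeltaO_eq, DeltaO_eq, h]

lemma DeltaO_comp {k : ℕ} {α : Type*} [DecidableEq α] (σ ρ : Equiv.Perm (Fin (2 * k)))
    (i : Fin (2 * k) → α) : (DeltaO ρ (i ∘ σ) : ℝ) = DeltaO (σ * ρ) i := rfl

/-- Index sequences constant on the components of `Γ(ρ)` are counted by `n ^ c(ρ)`. -/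
lemma sum_Delta_one {n k : ℕ} (ρ : Equiv.Perm (Fin (2 * k))) :
    ∑ i : Fin (2 * k) → Fin n, (DeltaO 1 i : ℝ) * DeltaO ρ i = (n : ℝ) ^ ccount ρ := by
  classical
  have h : ∀ i : Fin (2 * k) → Fin n, (DeltaO 1 i : ℝ) * DeltaO ρ i =
      if ∀ a b, (Gamma ρ).Adj a b → i a = i b then 1 else 0 := by
    intro i
    unfold DeltaO
    rw [Finset.prod_ite_zero, Finset.prod_ite_zero, ite_zero_mul_ite_zero]
    simp only [Finset.prod_const_one, mul_one]
    congr 1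
    simp only [Gamma, SimpleGraph.fromRel_adj, Finset.mem_univ, true_imp_iff,
      Equiv.Perm.one_apply, eq_iff_iff]
    constructor
    · rintro ⟨h1, h2⟩ a b ⟨-, (⟨r, rfl, rfl⟩ | ⟨r, rfl, rfl⟩) | (⟨r, rfl, rfl⟩ | ⟨r, rfl, rfl⟩)⟩
      · exact h1 r
      · exact h2 r
      · exact (h1 r).symm
      · exact (h2 r).symm
    · intro h
      exact ⟨fun r => h _ _ ⟨lo_ne_hi _ _, Or.inl (Or.inl ⟨r, rfl, rfl⟩)⟩,
        fun r => h _ _ ⟨fun h => lo_ne_hi _ _ (ρ.injective h), Or.inl (Or.inr ⟨r, rfl, rfl⟩)⟩⟩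
  simp only [h]
  rw [Finset.sum_boole, ← Fintype.card_subtype]
  let e : {i : Fin (2 * k) → Fin n // ∀ a b, (Gamma ρ).Adj a b → i a = i b} ≃
      ((Gamma ρ).ConnectedComponent → Fin n) :=
    { toFun := fun i c => c.lift i.1 (fun v w p _ => by
        clear * - p
        induction p with
        | nil => rfl
        | cons hadj _ ih => exact (i.2 _ _ hadj).trans ih)
      invFun := fun g => ⟨fun x => g ((Gamma ρ).connectedComponentMk x), fun a b hab => by
        exact congrArg g (SimpleGraph.ConnectedComponent.eq.mpr hab.reachable)⟩
      left_inv := fun i => rfl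
      right_inv := fun g => by
        funext c
        induction c using SimpleGraph.ConnectedComponent.ind with
        | h v => rfl }
  have : Fintype (Gamma ρ).ConnectedComponent := Fintype.ofFinite _
  rw [Fintype.card_congr e, Fintype.card_fun, Fintype.card_fin, ccount, Nat.card_eq_fintype_card]
  push_cast; rfl

lemma sum_Delta {n k : ℕ} (σ τ : Equiv.Perm (Fin (2 * k))) :
    ∑ i : Fin (2 * k) → Fin n, (DeltaO σ i : ℝ) * DeltaO τ i =
      (n : ℝ) ^ ccount (σ⁻¹ * τ) := by
  rw [← sum_Delta_one]
  refine Fintype.sum_equiv (Equiv.arrowCongr σ⁻¹ (Equiv.refl _)) _ _ fun i => ?_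
  have : (Equiv.arrowCongr σ⁻¹ (Equiv.refl (Fin n))) i = i ∘ σ := by
    funext x; simp [Equiv.arrowCongr]; rfl
  rw [this, DeltaO_comp, DeltaO_comp]
  simp

/-- Distributivity along the blocks of the pair partition of `σ`. -/
lemma sum_prod_pairs {n k : ℕ} (σ : Equiv.Perm (Fin (2 * k))) (F : Fin k → Fin n → Fin n → ℝ) :
    ∑ p : Fin (2 * k) → Fin n, ∏ r, F r (p (σ (lo r))) (p (σ (hi r))) =
      ∏ r, ∑ a, ∑ b, F r a b := by
  classical
  have h : ∀ r, ∑ a, ∑ b, F r a b = ∑ c : Fin n × Fin n, F r c.1 c.2 := fun r =>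
    (Fintype.sum_prod_type' _).symm
  simp only [h]
  rw [Finset.prod_univ_sum, Fintype.piFinset_univ]
  refine Fintype.sum_equiv
    { toFun := fun p r => (p (σ (lo r)), p (σ (hi r)))
      invFun := fun q x => if ((σ⁻¹ x : Fin (2 * k)) : ℕ) % 2 = 0 then (q (blk (σ⁻¹ x))).1
        else (q (blk (σ⁻¹ x))).2
      left_inv := fun p => by
        funext x
        obtain ⟨y, rfl⟩ := σ.surjective x
        have h0 : ∀ r : Fin k, ((lo r : Fin (2 * k)) : ℕ) % 2 = 0 := fun r => by simp [lo]
        have h1 : ∀ r : Fin k, ((hi r : Fin (2 * k)) : ℕ) % 2 = 1 := fun r => by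
          simp only [hi]; omega
        rcases lo_or_hi y with hy | hy <;> rw [hy] <;> simp [h0, h1]
      right_inv := fun q => by
        have h0 : ∀ r : Fin k, ((lo r : Fin (2 * k)) : ℕ) % 2 = 0 := fun r => by simp [lo]
        have h1 : ∀ r : Fin k, ((hi r : Fin (2 * k)) : ℕ) % 2 = 1 := fun r => by
          simp only [hi]; omega
        funext r
        simp [h0, h1] } _ _ fun p => rfl

lemma prod_pairs {k : ℕ} (σ : Equiv.Perm (Fin (2 * k))) (f : Fin (2 * k) → ℝ) :
    ∏ s, f s = ∏ r : Fin k, f (σ (lo r)) * f (σ (hi r)) := by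
  classical
  rw [← Equiv.prod_comp σ, ← Finset.prod_fiberwise univ blk]
  refine Finset.prod_congr rfl fun r _ => ?_
  have : (univ.filter fun x : Fin (2 * k) => blk x = r) = {lo r, hi r} := by
    ext x
    simp only [Finset.mem_filter, Finset.mem_univ, true_and, Finset.mem_insert,
      Finset.mem_singleton]
    constructor
    · rintro rfl; exact lo_or_hi x
    · rintro (rfl | rfl) <;> simp
  rw [this, Finset.prod_pair (lo_ne_hi _ _)]

/-- Contraction of a product of matrix entries with a pairing tensor. -/
lemma contract {n k : ℕ} (g : Matrix (Fin n) (Fin n) ℝ) (hg : g * gᵀ = 1)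
    (σ : Equiv.Perm (Fin (2 * k))) (i : Fin (2 * k) → Fin n) :
    ∑ p : Fin (2 * k) → Fin n, (∏ s, g (i s) (p s)) * DeltaO σ p = DeltaO σ i := by
  have h : ∀ p : Fin (2 * k) → Fin n, (∏ s, g (i s) (p s)) * (DeltaO σ p : ℝ) =
      ∏ r, (fun (r : Fin k) a b => g (i (σ (lo r))) a * g (i (σ (hi r))) b *
        (if a = b then 1 else 0)) r (p (σ (lo r))) (p (σ (hi r))) := by
    intro p
    rw [prod_pairs σ, DeltaO, ← Finset.prod_mul_distrib]
  simp only [h]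
  rw [sum_prod_pairs σ (fun (r : Fin k) a b => g (i (σ (lo r))) a * g (i (σ (hi r))) b *
        (if a = b then 1 else 0)), DeltaO]
  refine Finset.prod_congr rfl fun r _ => ?_
  have h2 := congrFun (congrFun hg (i (σ (lo r)))) (i (σ (hi r)))
  rw [Matrix.mul_apply, Matrix.one_apply] at h2
  simp only [mul_ite, mul_one, mul_zero, Finset.sum_ite_eq, Finset.mem_univ, if_true]
  rw [← h2]
  rfl

/-! ### Invariant tensors -/

/-- `T`, viewed as a tensor in `(ℝⁿ)^{⊗ι}`, is fixed by the diagonal action of `O(n)`. -/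
def Inv {n : ℕ} {ι : Type*} [Fintype ι] [DecidableEq ι] (T : (ι → Fin n) → ℝ) : Prop :=
  ∀ g : Matrix (Fin n) (Fin n) ℝ, g * gᵀ = 1 →
    ∀ i, ∑ p : ι → Fin n, (∏ s, g (i s) (p s)) * T p = T i

section Invariant

variable {n : ℕ} {ι : Type*} [Fintype ι] [DecidableEq ι] {T : (ι → Fin n) → ℝ}

/-- Invariance under a signed permutation matrix. -/
lemma Inv.monomial (hT : Inv T) (π : Equiv.Perm (Fin n)) (e : Fin n → ℝ)
    (he : ∀ a, e a * e a = 1) (i : ι → Fin n) :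
    (∏ s, e (i s)) * T (π ∘ i) = T i := by
  have h := hT (Matrix.of fun a b => if b = π a then e a else 0) (by
    ext a b
    rw [Matrix.mul_apply, Matrix.one_apply]
    simp only [Matrix.transpose_apply, Matrix.of_apply, ite_mul, zero_mul, Finset.sum_ite_eq',
      Finset.mem_univ, if_true, EmbeddingLike.apply_eq_iff_eq]
    by_cases hab : a = b
    · subst hab; simp [he]
    · simp [hab]) i
  rw [← h, Finset.sum_eq_single (π ∘ i)]
  · simp
  · intro p _ hp
    obtain ⟨s, hs⟩ := Function.ne_iff.mp hp
    rw [Finset.prod_eq_zero (Finset.mem_univ s), zero_mul]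
    exact if_neg hs
  · simp

lemma Inv.perm (hT : Inv T) (π : Equiv.Perm (Fin n)) (i : ι → Fin n) : T (π ∘ i) = T i := by
  simpa using hT.monomial π (fun _ => 1) (by simp) i

/-- The reflection in the coordinate `a` forces each index value to occur an even number of
times. -/
lemma Inv.even (hT : Inv T) (i : ι → Fin n) (a : Fin n)
    (ha : ¬ Even (univ.filter fun s => i s = a).card) : T i = 0 := by
  have h := hT.monomial 1 (fun b => if b = a then -1 else 1) (by
    intro b; by_cases hb : b = a <;> simp [hb]) i
  rw [Finset.prod_ite, Finset.prod_const, Finset.prod_const_one, mul_one,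
    (Nat.not_even_iff_odd.mp ha).neg_one_pow] at h
  have h2 : ((1 : Equiv.Perm (Fin n)) ∘ i) = i := rfl
  rw [h2] at h
  linarith

/-- The generator `E_ab - E_ba` of rotations in the coordinate plane `(a, b)`. -/
def skew (a b : Fin n) : Matrix (Fin n) (Fin n) ℝ := Matrix.single a b 1 - Matrix.single b a 1

/-- The rotation by the angle `t` in the coordinate plane `(a, b)`. -/
noncomputable def rot (a b : Fin n) (t : ℝ) : Matrix (Fin n) (Fin n) ℝ :=
  1 + Real.sin t • skew a b + (Real.cos t - 1) • (Matrix.single a a 1 + Matrix.single b b 1)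

lemma rot_orth {a b : Fin n} (hab : a ≠ b) (t : ℝ) : rot a b t * (rot a b t)ᵀ = 1 := by
  set A := skew a b with hA
  set D : Matrix (Fin n) (Fin n) ℝ := Matrix.single a a 1 + Matrix.single b b 1 with hD
  have hAt : Aᵀ = -A := by simp [hA, skew]
  have hDt : Dᵀ = D := by simp [hD]
  have hAA : A * A = -D := by
    simp [hA, hD, skew, sub_mul, mul_sub, hab, hab.symm]
    abel
  have hAD : A * D = A := by
    simp [hA, hD, skew, sub_mul, mul_add, hab, hab.symm]
    abel
  have hDA : D * A = A := by
    simp [hA, hD, skew, add_mul, mul_sub, hab, hab.symm]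
  have hDD : D * D = D := by
    simp [hD, add_mul, mul_add, hab, hab.symm]
  have hr : rot a b t = 1 + Real.sin t • A + (Real.cos t - 1) • D := rfl
  rw [hr]
  simp only [Matrix.transpose_add, Matrix.transpose_smul, Matrix.transpose_one, hAt, hDt,
    add_mul, mul_add, one_mul, mul_one, smul_mul_smul_comm, mul_neg, smul_neg, hAA, hAD, hDA, hDD]
  have key : (Real.cos t - 1) * 2 + (Real.cos t - 1) * (Real.cos t - 1)
      + Real.sin t * Real.sin t = 0 := by
    nlinarith [Real.sin_sq_add_cos_sq t]
  have h0 : ((Real.cos t - 1) * 2 + (Real.cos t - 1) * (Real.cos t - 1)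
      + Real.sin t * Real.sin t) • D = 0 := by rw [key, zero_smul]
  rw [← sub_eq_zero, ← h0]
  module

lemma rot_deriv (a b c d : Fin n) :
    HasDerivAt (fun t => rot a b t c d) (skew a b c d) 0 := by
  have h1 : HasDerivAt (fun t : ℝ => (1 : Matrix (Fin n) (Fin n) ℝ) c d
      + Real.sin t * skew a b c d
      + (Real.cos t - 1) * ((Matrix.single a a 1 + Matrix.single b b 1 :
        Matrix (Fin n) (Fin n) ℝ) c d))
      (Real.cos 0 * skew a b c d + (-Real.sin 0) * ((Matrix.single a a 1 + Matrix.single b b 1 :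
        Matrix (Fin n) (Fin n) ℝ) c d)) 0 :=
    (((Real.hasDerivAt_sin 0).mul_const _).const_add _).add
      (((Real.hasDerivAt_cos 0).sub_const _).mul_const _)
  rw [Real.cos_zero, Real.sin_zero, one_mul, neg_zero, zero_mul, add_zero] at h1
  exact h1

/-- Invariance differentiated along a one-parameter group of rotations. -/
lemma Inv.infinitesimal (hT : Inv T) {a b : Fin n} (hab : a ≠ b) (i : ι → Fin n) :
    ∑ s, ∑ q, skew a b (i s) q * T (Function.update i s q) = 0 := by
  have h1 : HasDerivAt (fun t : ℝ => ∑ p : ι → Fin n, (∏ s, rot a b t (i s) (p s)) * T p)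
      (∑ p : ι → Fin n, (∑ s, (∏ r ∈ univ.erase s, rot a b 0 (i r) (p r)) •
        skew a b (i s) (p s)) * T p) 0 := by
    refine HasDerivAt.fun_sum fun p _ => ?_
    exact (HasDerivAt.fun_finsetProd fun s _ => rot_deriv a b (i s) (p s)).mul_const _
  have h2 : (fun t : ℝ => ∑ p : ι → Fin n, (∏ s, rot a b t (i s) (p s)) * T p)
      = fun _ => T i := by
    funext t
    exact hT _ (rot_orth hab t) i
  rw [h2] at h1
  have h3 := h1.unique (hasDerivAt_const (0 : ℝ) (T i))
  refine Eq.trans ?_ h3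
  simp only [Finset.sum_mul]
  rw [Finset.sum_comm (s := (univ : Finset (ι → Fin n)))]
  refine Finset.sum_congr rfl fun s _ => ?_
  have h4 : ∀ c d, rot a b 0 c d = if c = d then 1 else 0 := fun c d => by
    simp [rot, Matrix.one_apply]
  simp only [h4, smul_eq_mul]
  -- only the sequences agreeing with `i` off `s` contribute
  symm
  have hinj : Function.Injective (Function.update i s) := Function.update_injective i s
  rw [← Finset.sum_subset (Finset.subset_univ (univ.image (Function.update i s)))]
  · rw [Finset.sum_image hinj.injOn]
    refine Finset.sum_congr rfl fun q _ => ?_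
    rw [Finset.prod_eq_one, one_mul, Function.update_self]
    intro r hr
    rw [Function.update_of_ne (Finset.ne_of_mem_erase hr), if_pos rfl]
  · intro p _ hp
    have : ∃ r, r ≠ s ∧ i r ≠ p r := by
      by_contra! hcon
      apply hp
      rw [Finset.mem_image]
      refine ⟨p s, Finset.mem_univ _, ?_⟩
      funext r
      by_cases hr : r = s
      · subst hr; simp
      · rw [Function.update_of_ne hr, hcon r hr]
    obtain ⟨r, hr, hne⟩ := this
    rw [Finset.prod_eq_zero (Finset.mem_erase.mpr ⟨hr, Finset.mem_univ r⟩) (if_neg hne)]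
    simp

/-- If `b` is a value not used by `i`, then `T i` is the sum over `s ≠ s₀` with `i s = i s₀` of
the values of `T` at the sequences with `s₀` and `s` relabelled to `b`; in particular `T i`
vanishes when all these values do. -/
lemma Inv.split (hT : Inv T) (i : ι → Fin n) (s₀ : ι) (b : Fin n) (hb : ∀ s, i s ≠ b)
    (h : ∀ s, s ≠ s₀ → i s = i s₀ →
      T (Function.update (Function.update i s₀ b) s b) = 0) : T i = 0 := by
  have h1 := hT.infinitesimal (hb s₀) (Function.update i s₀ b)
  rw [Finset.sum_eq_single s₀] at h1
  · rw [Finset.sum_eq_single (i s₀)] at h1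
    · simpa [skew, Matrix.single_apply, (hb s₀), (hb s₀).symm] using h1
    · intro q _ hq
      simp [skew, (hb s₀), hq.symm]
    · simp
  · intro s _ hs
    apply Finset.sum_eq_zero
    intro q _
    rw [Function.update_of_ne hs]
    by_cases hs2 : i s = i s₀
    · by_cases hq : q = b
      · rw [hq, h s hs hs2, mul_zero]
      · simp [skew, hs2, Ne.symm hq, (hb s₀).symm]
    · simp [skew, Ne.symm hs2, (hb s).symm]
  · simp

end Invariant

/-- The index sequence with the value `r` on the block `{σ (lo r), σ (hi r)}`. -/
def seqOf {n k : ℕ} (hnk : k ≤ n) (σ : Equiv.Perm (Fin (2 * k))) (x : Fin (2 * k)) : Fin n :=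
  Fin.castLE hnk (blk (σ⁻¹ x))

lemma DeltaO_seqOf {n k : ℕ} (hnk : k ≤ n) {σ τ : Equiv.Perm (Fin (2 * k))} (hσ : σ ∈ Mset k)
    (hτ : τ ∈ Mset k) : (DeltaO τ (seqOf hnk σ) : ℝ) = if τ = σ then 1 else 0 := by
  unfold DeltaO
  rw [Finset.prod_ite_zero]
  simp only [Finset.prod_const_one]
  congr 1
  simp only [seqOf, Finset.mem_univ, true_imp_iff, (Fin.castLE_injective hnk).eq_iff, eq_iff_iff]
  have := isHyper_iff_blk (σ⁻¹ * τ)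
  simp only [Equiv.Perm.mul_apply] at this
  rw [← this, pr_eq_iff]
  constructor
  · intro h; exact rep_unique (mem_Mset.mp hτ) (mem_Mset.mp hσ) h.symm
  · rintro rfl; rfl

/-- If every value of `i` is taken exactly twice, then `i` is a relabelling of some `seqOf`. -/
lemma exists_seqOf {n k : ℕ} (hnk : k ≤ n) (i : Fin (2 * k) → Fin n)
    (h : ∀ x, (univ.filter fun y => i y = i x).card = 2) :
    ∃ σ ∈ Mset k, ∃ π : Equiv.Perm (Fin n), π ∘ seqOf hnk σ = i := by
  have h1 : ∀ x, ∃ y, y ≠ x ∧ i y = i x ∧ ∀ z, i z = i x → z = x ∨ z = y := by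
    intro x
    obtain ⟨u, v, huv, hs⟩ := Finset.card_eq_two.mp (h x)
    have hmem : ∀ z, i z = i x ↔ z = u ∨ z = v := fun z => by
      have : z ∈ (univ.filter fun y => i y = i x) ↔ z ∈ ({u, v} : Finset _) := by rw [hs]
      simpa using this
    rcases (hmem x).mp rfl with hx | hx
    · exact ⟨v, by rw [hx]; exact huv.symm, (hmem v).mpr (Or.inr rfl), fun z hz => by
        rw [hx]; exact (hmem z).mp hz⟩
    · exact ⟨u, by rw [hx]; exact huv, (hmem u).mpr (Or.inl rfl), fun z hz => by
        rw [hx]; exact ((hmem z).mp hz).symm⟩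
  choose p hp1 hp2 hp3 using h1
  have hpp : ∀ x, p (p x) = x := fun x => by
    rcases hp3 x (p (p x)) ((hp2 _).trans (hp2 _)) with h | h
    · exact h
    · exact absurd h (hp1 _)
  obtain ⟨σ, hσ, hpr⟩ := exists_rep p hpp hp1
  refine ⟨σ, mem_Mset.mpr hσ, ?_⟩
  have hinj : Function.Injective fun r : Fin k => i (σ (lo r)) := by
    intro r s hrs
    rcases hp3 _ _ hrs with h | h
    · have := congrArg blk (σ.injective h)
      simpa using this
    · rw [← hpr, pr_lo] at h
      exact absurd (σ.injective h) (lo_ne_hi _ _)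
  obtain ⟨π, hπ⟩ := Equiv.Perm.exists_extending_pair (Fin.castLE hnk) _
    (Fin.castLE_injective hnk) hinj
  refine ⟨π, ?_⟩
  funext x
  obtain ⟨y, rfl⟩ := σ.surjective x
  simp only [Function.comp_apply, seqOf, perm_inv_apply, hπ]
  rcases lo_or_hi y with hy | hy
  · rw [← hy]
  · rw [hy, blk_hi, ← pr_lo, hpr, hp2]

/-- For `k ≤ n`, an invariant tensor is determined by its values at the sequences `seqOf σ`. -/
lemma Inv.eq_zero {n k : ℕ} (hnk : k ≤ n) {T : (Fin (2 * k) → Fin n) → ℝ} (hT : Inv T)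
    (h0 : ∀ σ ∈ Mset k, T (seqOf hnk σ) = 0) (i : Fin (2 * k) → Fin n) : T i = 0 := by
  induction hd : n - (univ.image i).card using Nat.strong_induction_on generalizing i with
  | _ d ih =>
  by_cases heven : ∀ a, Even (univ.filter fun s => i s = a).card
  swap
  · push Not at heven
    obtain ⟨a, ha⟩ := heven
    exact hT.even i a (by simpa using ha)
  have hpos : ∀ x, 2 ≤ (univ.filter fun y => i y = i x).card := by
    intro x
    have h1 : 0 < (univ.filter fun y => i y = i x).card :=
      Finset.card_pos.mpr ⟨x, by simp⟩
    obtain ⟨c, hc⟩ := heven (i x)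
    omega
  by_cases htwo : ∀ x, (univ.filter fun y => i y = i x).card = 2
  · obtain ⟨σ, hσ, π, rfl⟩ := exists_seqOf hnk i htwo
    rw [hT.perm, h0 σ hσ]
  push Not at htwo
  obtain ⟨x, hx⟩ := htwo
  have hx3 : 2 < (univ.filter fun y => i y = i x).card := lt_of_le_of_ne (hpos x) (Ne.symm hx)
  -- fewer than `k` values occur, so a fresh value `b` is available
  have hcard : (univ.image i).card < n := by
    have h1 : (univ : Finset (Fin (2 * k))).card =
        ∑ a ∈ univ.image i, (univ.filter fun y => i y = a).card :=
      Finset.card_eq_sum_card_fiberwise fun y _ =>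
        Finset.mem_coe.mpr (Finset.mem_image_of_mem i (Finset.mem_univ y))
    have h2 : ∑ a ∈ univ.image i, 2 < ∑ a ∈ univ.image i, (univ.filter fun y => i y = a).card := by
      apply Finset.sum_lt_sum
      · intro a ha
        obtain ⟨y, -, rfl⟩ := Finset.mem_image.mp ha
        exact hpos y
      · exact ⟨i x, Finset.mem_image_of_mem i (Finset.mem_univ x), hx3⟩
    rw [Finset.sum_const, smul_eq_mul, ← h1, Finset.card_univ, Fintype.card_fin] at h2
    omega
  obtain ⟨b, hb⟩ : ∃ b, b ∉ univ.image i := by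
    by_contra! hcon
    have : univ.image i = univ := Finset.eq_univ_iff_forall.mpr hcon
    rw [this, Finset.card_univ, Fintype.card_fin] at hcard
    exact lt_irrefl _ hcard
  have hb' : ∀ s, i s ≠ b := fun s hs =>
    hb (Finset.mem_image.mpr ⟨s, Finset.mem_univ s, hs⟩)
  refine hT.split i x b hb' fun s hs his => ?_
  refine ih _ ?_ _ rfl
  set i' := Function.update (Function.update i x b) s b with hi'
  have hsub : insert b (univ.image i) ⊆ univ.image i' := by
    intro c hc
    rcases Finset.mem_insert.mp hc with rfl | hc
    · exact Finset.mem_image.mpr ⟨s, Finset.mem_univ _, by simp [hi']⟩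
    · obtain ⟨y, -, rfl⟩ := Finset.mem_image.mp hc
      by_cases hy : i y = i x
      · -- a third position carrying the value `i x` is left unchanged
        obtain ⟨z, hz1, hz2⟩ : ∃ z ∈ univ.filter (fun y => i y = i x), z ∉ ({x, s} : Finset _) := by
          apply Finset.exists_mem_notMem_of_card_lt_card
          exact lt_of_le_of_lt Finset.card_le_two hx3
        simp only [Finset.mem_filter, Finset.mem_univ, true_and, Finset.mem_insert,
          Finset.mem_singleton, not_or] at hz1 hz2
        refine Finset.mem_image.mpr ⟨z, Finset.mem_univ _, ?_⟩
        rw [hi', Function.update_of_ne hz2.2, Function.update_of_ne hz2.1, hz1, hy]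
      · refine Finset.mem_image.mpr ⟨y, Finset.mem_univ _, ?_⟩
        have h1 : y ≠ x := fun h => hy (by rw [h])
        have h2 : y ≠ s := fun h => hy (by rw [h, his])
        rw [hi', Function.update_of_ne h2, Function.update_of_ne h1]
  have h3 := Finset.card_le_card hsub
  rw [Finset.card_insert_of_notMem hb] at h3
  omega

/-- For `k ≤ n`, an invariant tensor of degree `2k` is a combination of the pairing tensors. -/
lemma Inv.expand {n k : ℕ} (hnk : k ≤ n) {T : (Fin (2 * k) → Fin n) → ℝ} (hT : Inv T)
    (i : Fin (2 * k) → Fin n) :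
    T i = ∑ σ ∈ Mset k, T (seqOf hnk σ) * DeltaO σ i := by
  rw [← sub_eq_zero]
  refine Inv.eq_zero hnk (T := fun i => T i - ∑ σ ∈ Mset k, T (seqOf hnk σ) * DeltaO σ i)
    ?_ ?_ i
  · intro g hg i
    simp only [mul_sub, Finset.sum_sub_distrib, hT g hg i, Finset.mul_sum]
    rw [Finset.sum_comm]
    congr 1
    refine Finset.sum_congr rfl fun σ _ => ?_
    rw [← contract g hg σ i, Finset.mul_sum]
    exact Finset.sum_congr rfl fun p _ => by ring
  · intro σ hσ
    rw [Finset.sum_congr rfl fun τ hτ => by rw [DeltaO_seqOf hnk hσ hτ]]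
    simp [hσ]

/-! ### Haar moments -/

instance (n : ℕ) : BorelSpace (OG n) := ⟨rfl⟩

lemma continuous_entries {n : ℕ} {ι : Type*} [Fintype ι] (i j : ι → Fin n) :
    Continuous fun R : OG n => ∏ s, (R : Matrix (Fin n) (Fin n) ℝ) (i s) (j s) :=
  continuous_finsetProd _ fun s _ => continuous_subtype_val.matrix_elem (i s) (j s)

lemma orth_mul_transpose {n : ℕ} (R : OG n) :
    (R : Matrix (Fin n) (Fin n) ℝ) * (R : Matrix (Fin n) (Fin n) ℝ)ᵀ = 1 :=
  (Matrix.mem_orthogonalGroup_iff _ _).mp R.2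

lemma orth_transpose_mul {n : ℕ} (R : OG n) :
    (R : Matrix (Fin n) (Fin n) ℝ)ᵀ * (R : Matrix (Fin n) (Fin n) ℝ) = 1 :=
  (Matrix.mem_orthogonalGroup_iff' _ _).mp R.2

lemma integrable_entries {n : ℕ} (μ : Measure (OG n)) [IsProbabilityMeasure μ]
    {ι : Type*} [Fintype ι] (i j : ι → Fin n) :
    Integrable (fun R : OG n => ∏ s, (R : Matrix (Fin n) (Fin n) ℝ) (i s) (j s)) μ := by
  refine Integrable.of_bound (continuous_entries i j).aestronglyMeasurable 1
    (Filter.Eventually.of_forall fun R => ?_)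
  rw [norm_prod]
  exact Finset.prod_le_one (fun _ _ => norm_nonneg _)
    fun s _ => entry_norm_bound_of_unitary R.2 (i s) (j s)

lemma integral_translate {n : ℕ} (μ : Measure (OG n))
    (hμ : ∀ g : OG n, μ.map (fun x => g * x) = μ) {ι : Type*} [Fintype ι] (i j : ι → Fin n)
    (g : OG n) :
    ∫ R : OG n, ∏ s, ((g : Matrix (Fin n) (Fin n) ℝ) * (R : Matrix (Fin n) (Fin n) ℝ))
      (i s) (j s) ∂μ = ∫ R : OG n, ∏ s, (R : Matrix (Fin n) (Fin n) ℝ) (i s) (j s) ∂μ := by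
  have hc : Continuous fun x : OG n => g * x := continuous_const_mul g
  conv_rhs => rw [← hμ g]
  rw [integral_map hc.measurable.aemeasurable (continuous_entries i j).aestronglyMeasurable]
  rfl

lemma moments_inv {n : ℕ} (μ : Measure (OG n)) [IsProbabilityMeasure μ]
    (hμ : ∀ g : OG n, μ.map (fun x => g * x) = μ) {ι : Type*} [Fintype ι] [DecidableEq ι]
    (j : ι → Fin n) :
    Inv fun i : ι → Fin n => ∫ R : OG n, ∏ s, (R : Matrix (Fin n) (Fin n) ℝ) (i s) (j s) ∂μ := by
  intro g hg i
  beta_reduce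
  rw [← integral_translate μ hμ i j ⟨g, (Matrix.mem_orthogonalGroup_iff _ _).mpr hg⟩]
  simp only [Matrix.mul_apply, Finset.prod_univ_sum, Fintype.piFinset_univ,
    Finset.prod_mul_distrib]
  rw [integral_finsetSum _ fun p _ => (integrable_entries μ p j).const_mul _]
  simp only [integral_const_mul]

lemma odd_moment {m k' : ℕ} (ν : Measure (OG m))
    (hν : ∀ g : OG m, ν.map (fun x => g * x) = ν) (i j : Fin (2 * k' + 1) → Fin m) :
    ∫ R : OG m, ∏ s, (R : Matrix (Fin m) (Fin m) ℝ) (i s) (j s) ∂ν = 0 := by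
  have h := integral_translate ν hν i j ⟨-1, (Matrix.mem_orthogonalGroup_iff _ _).mpr (by simp)⟩
  simp only [neg_mul, one_mul, Matrix.neg_apply, Finset.prod_neg, Finset.card_univ,
    Fintype.card_fin] at h
  have h1 : (-1 : ℝ) ^ (2 * k' + 1) = -1 := Odd.neg_one_pow ⟨k', rfl⟩
  rw [h1, integral_const_mul] at h
  linarith

/-- Column orthogonality: contracting the moments with a pairing tensor in the row indices. -/
lemma contract_moments {n k : ℕ} (μ : Measure (OG n)) [IsProbabilityMeasure μ]
    (τ : Equiv.Perm (Fin (2 * k))) (j : Fin (2 * k) → Fin n) :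
    ∑ i : Fin (2 * k) → Fin n,
      (∫ R : OG n, ∏ s, (R : Matrix (Fin n) (Fin n) ℝ) (i s) (j s) ∂μ) * DeltaO τ i
      = DeltaO τ j := by
  simp only [← integral_mul_const]
  rw [← integral_finsetSum _ fun p _ => (integrable_entries μ p j).mul_const _]
  have : ∀ R : OG n, ∑ i : Fin (2 * k) → Fin n,
      (∏ s, (R : Matrix (Fin n) (Fin n) ℝ) (i s) (j s)) * (DeltaO τ i : ℝ) = DeltaO τ j :=
    fun R => contract (R : Matrix (Fin n) (Fin n) ℝ)ᵀ (by
      rw [Matrix.transpose_transpose]; exact orth_transpose_mul R) τ j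
  simp [this]

/-! ### The Weingarten function inverts the Gram matrix -/

lemma gram_mul_wg {n k : ℕ} (WgO : Equiv.Perm (Fin (2 * k)) → ℝ)
    (hbi : ∀ (σ ζ ζ' : Equiv.Perm (Fin (2 * k))), IsHyper ζ → IsHyper ζ' →
      WgO (ζ * σ * ζ') = WgO σ)
    (hWg : sconv (fun σ => (n : ℝ) ^ ccount σ) WgO = oneH)
    {σ ρ : Equiv.Perm (Fin (2 * k))} (hσ : σ ∈ Mset k) (hρ : ρ ∈ Mset k) :
    ∑ τ ∈ Mset k, (n : ℝ) ^ ccount (σ⁻¹ * τ) * WgO (τ⁻¹ * ρ) = if σ = ρ then 1 else 0 := by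
  have h1 := congrFun hWg (σ⁻¹ * ρ)
  have h2 := sum_Mset_translate
    (fun τ => (n : ℝ) ^ ccount τ * WgO (τ⁻¹ * (σ⁻¹ * ρ))) (by
      intro a b hab
      have e1 : (n : ℝ) ^ ccount a = (n : ℝ) ^ ccount b := by
        rw [← sum_Delta_one, ← sum_Delta_one]
        simp only [DeltaO_congr hab]
      have e2 : WgO (a⁻¹ * (σ⁻¹ * ρ)) = WgO (b⁻¹ * (σ⁻¹ * ρ)) := by
        have h3 := hbi (b⁻¹ * (σ⁻¹ * ρ)) (a⁻¹ * b) 1 ((pr_eq_iff a b).mpr hab)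
          ((isHyper_iff 1).mpr fun _ => rfl)
        rw [← h3]
        congr 1
        group
      simp only [e1, e2]) σ⁻¹
  unfold sconv at h1
  rw [← h2] at h1
  have h3 : ∀ τ : Equiv.Perm (Fin (2 * k)), (σ⁻¹ * τ)⁻¹ * (σ⁻¹ * ρ) = τ⁻¹ * ρ := fun τ => by group
  simp only [h3] at h1
  rw [h1]
  unfold oneH
  congr 1
  rw [pr_eq_iff, eq_iff_iff]
  exact ⟨fun h => rep_unique (mem_Mset.mp hσ) (mem_Mset.mp hρ) h, fun h => by rw [h]⟩

/-- Inverting the Gram matrix; `W` is symmetric as the inverse of a symmetric matrix. -/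
lemma solve_gram {ι : Type*} [Fintype ι] [DecidableEq ι] {G W : Matrix ι ι ℝ} (hG : Gᵀ = G)
    (hGW : G * W = 1) {c d : ι → ℝ} (h : ∀ τ, ∑ σ, c σ * G σ τ = d τ) (σ : ι) :
    c σ = ∑ τ, d τ * W σ τ := by
  have hW : Wᵀ = W := by
    have h1 : Wᵀ * G = 1 := by rw [← hG, ← Matrix.transpose_mul, hGW, Matrix.transpose_one]
    calc Wᵀ = Wᵀ * (G * W) := by rw [hGW, mul_one]
      _ = W := by rw [← mul_assoc, h1, one_mul]
  have h2 : c ᵥ* G = d := funext h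
  have h3 : d ᵥ* W = c := by rw [← h2, Matrix.vecMul_vecMul, hGW, Matrix.vecMul_one]
  rw [← h3]
  refine Finset.sum_congr rfl fun τ _ => ?_
  have h4 : W τ σ = W σ τ := congrFun (congrFun hW σ) τ
  rw [← h4]

/-- Weingarten calculus for orthogonal groups. -/
theorem stmt2 (n k : ℕ) (hk : 0 < k) (hnk : k ≤ n)
    (μ : Measure (OG n)) [IsProbabilityMeasure μ]
    (hμ : ∀ g : OG n, μ.map (fun x => g * x) = μ)
    (WgO : Equiv.Perm (Fin (2 * k)) → ℝ)
    (hbi : ∀ (σ ζ ζ' : Equiv.Perm (Fin (2 * k))), IsHyper ζ → IsHyper ζ' →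
      WgO (ζ * σ * ζ') = WgO σ)
    (hWg : sconv (fun σ => (n : ℝ) ^ ccount σ) WgO = oneH)
    (i j : Fin (2 * k) → Fin n)
    (m k' : ℕ) (hm : 1 ≤ m)
    (ν : Measure (OG m)) [IsProbabilityMeasure ν]
    (hν : ∀ g : OG m, ν.map (fun x => g * x) = ν) :
    (∫ R : OG n, ∏ s : Fin (2 * k), (R : Matrix (Fin n) (Fin n) ℝ) (i s) (j s) ∂μ
      = ∑ σ ∈ Mset k, ∑ τ ∈ Mset k, DeltaO σ i * DeltaO τ j * WgO (σ⁻¹ * τ)) ∧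
    ∀ i' j' : Fin (2 * k' + 1) → Fin m,
      ∫ R : OG m, ∏ s : Fin (2 * k' + 1), (R : Matrix (Fin m) (Fin m) ℝ) (i' s) (j' s) ∂ν
        = 0 := by
  classical
  refine ⟨?_, odd_moment ν hν⟩
  let E : (Fin (2 * k) → Fin n) → ℝ := fun i =>
    ∫ R : OG n, ∏ s, (R : Matrix (Fin n) (Fin n) ℝ) (i s) (j s) ∂μ
  have hE : ∀ i, E i = ∑ σ ∈ Mset k, E (seqOf hnk σ) * DeltaO σ i :=
    (moments_inv μ hμ j).expand hnk
  have hlin : ∀ τ, ∑ σ ∈ Mset k, E (seqOf hnk σ) * (n : ℝ) ^ ccount (σ⁻¹ * τ) = DeltaO τ j := by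
    intro τ
    rw [← contract_moments μ τ j]
    change _ = ∑ i, E i * DeltaO τ i
    simp only [← sum_Delta, Finset.mul_sum]
    rw [Finset.sum_comm]
    refine Finset.sum_congr rfl fun p _ => ?_
    rw [hE p, Finset.sum_mul]
    exact Finset.sum_congr rfl fun σ _ => by ring
  have hc : ∀ σ : Mset k, E (seqOf hnk σ) = ∑ τ : Mset k, DeltaO τ.1 j * WgO (σ.1⁻¹ * τ.1) := by
    refine solve_gram (G := Matrix.of fun σ τ : Mset k => (n : ℝ) ^ ccount (σ.1⁻¹ * τ.1))
      (W := Matrix.of fun σ τ : Mset k => WgO (σ.1⁻¹ * τ.1))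
      (c := fun σ : Mset k => E (seqOf hnk σ)) (d := fun τ : Mset k => DeltaO τ.1 j) ?_ ?_ ?_
    · ext σ τ
      simp only [Matrix.transpose_apply, Matrix.of_apply, ← sum_Delta]
      exact Finset.sum_congr rfl fun p _ => mul_comm _ _
    · ext σ ρ
      rw [Matrix.mul_apply, Matrix.one_apply]
      simp only [Matrix.of_apply]
      rw [Finset.sum_coe_sort (Mset k)
        (fun τ => (n : ℝ) ^ ccount (σ.1⁻¹ * τ) * WgO (τ⁻¹ * ρ.1)),
        gram_mul_wg WgO hbi hWg σ.2 ρ.2]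
      simp only [Subtype.ext_iff]
    · intro τ
      rw [← hlin τ.1]
      exact Finset.sum_coe_sort (Mset k)
        (fun σ => E (seqOf hnk σ) * (n : ℝ) ^ ccount (σ⁻¹ * τ.1))
  change E i = _
  rw [hE i]
  refine Finset.sum_congr rfl fun σ hσ => ?_
  rw [hc ⟨σ, hσ⟩, Finset.sum_coe_sort (Mset k) (fun τ => DeltaO τ j * WgO (σ⁻¹ * τ)),
    Finset.sum_mul]
  exact Finset.sum_congr rfl fun τ _ => by ring

end WgPaper
end
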